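/- Let (V₁, V₂) be a commuting pair of C₀-semigroups of isometries on a complex Hilbert space H that is dual doubly commuting (its dual pair with respect to a minimal unitary extension is doubly commuting). Then H decomposes as an orthogonal direct sum H = H_m ⊕ H_{p,u} ⊕ H_{u,p} ⊕ H_{u,u} of closed subspaces, each reducing both V₁ and V₂, such that: (1) the restricted pair (V₁|_{H_m}, V₂|_{H_m}) is a modified-bishift-semigroup; (2) V₁|_{H_{p,u}} is completely nonunitary and V₂|_{H_{p,u}} is a unitary semigroup; (3) V₁|_{H_{u,p}} is a unitary semigroup and V₂|_{H_{u,p}} is completely nonunitary; (4) both V₁|_{H_{u,u}} and V₂|_{H_{u,u}} are unitary semigroups. -/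

import Mathlib

open MeasureTheory ContinuousLinearMap
open scoped ENNReal NNReal InnerProductSpace ComplexInnerProductSpace

noncomputable section

section SemigroupDefs

variable {G : Type} [NormedAddCommGroup G] [InnerProductSpace ℂ G] [CompleteSpace G]

/-- A (C₀-) strongly continuous one-parameter semigroup of bounded operators. -/
def IsC0Semigroup (V : ℝ≥0 → G →L[ℂ] G) : Prop :=
  V 0 = 1 ∧ (∀ s t : ℝ≥0, V (s + t) = V s ∘L V t) ∧ ∀ x : G, Continuous fun t : ℝ≥0 => V t x

/-- A C₀-semigroup of isometries. -/
def IsIsometrySemigroup (V : ℝ≥0 → G →L[ℂ] G) : Prop :=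
  IsC0Semigroup V ∧ ∀ (t : ℝ≥0) (x : G), ‖V t x‖ = ‖x‖

/-- The closed subspace `L` reduces the semigroup `V`: it is invariant under every `V t`
and every `(V t)*`. -/
def ReducedBy (V : ℝ≥0 → G →L[ℂ] G) (L : Submodule ℂ G) : Prop :=
  (∀ t : ℝ≥0, ∀ x ∈ L, V t x ∈ L) ∧ ∀ t : ℝ≥0, ∀ x ∈ L, adjoint (V t) x ∈ L

/-- `T` restricts to a unitary operator on the subspace `L`. -/
def RestrictsToUnitaryOn (T : G →L[ℂ] G) (L : Submodule ℂ G) : Prop :=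
  (∀ x ∈ L, T x ∈ L) ∧ (∀ x ∈ L, ‖T x‖ = ‖x‖) ∧ ∀ y ∈ L, ∃ x ∈ L, T x = y

/-- Every `V t` restricts to a unitary operator on the subspace `L`. -/
def IsUnitarySemigroupOn (V : ℝ≥0 → G →L[ℂ] G) (L : Submodule ℂ G) : Prop :=
  ∀ t : ℝ≥0, RestrictsToUnitaryOn (V t) L

/-- A unitary C₀-semigroup: every `V t` is a surjective isometry. -/
def IsUnitarySemigroup (V : ℝ≥0 → G →L[ℂ] G) : Prop :=
  IsC0Semigroup V ∧ ∀ t : ℝ≥0, (∀ x : G, ‖V t x‖ = ‖x‖) ∧ Function.Surjective (V t)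

/-- `V` is completely nonunitary on the subspace `K`: there is no nonzero closed subspace
of `K` reducing `V` on which every `V t` restricts to a unitary. -/
def IsCnuOn (V : ℝ≥0 → G →L[ℂ] G) (K : Submodule ℂ G) : Prop :=
  ∀ L : Submodule ℂ G, IsClosed (L : Set G) → L ≤ K → ReducedBy V L →
    IsUnitarySemigroupOn V L → L = ⊥

/-- A completely nonunitary semigroup. -/
def IsCnu (V : ℝ≥0 → G →L[ℂ] G) : Prop := IsCnuOn V ⊤

/-- Two semigroups commute. -/
def SgCommute (V1 V2 : ℝ≥0 → G →L[ℂ] G) : Prop :=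
  ∀ t s : ℝ≥0, V1 t ∘L V2 s = V2 s ∘L V1 t

/-- Two semigroups doubly commute. -/
def SgDoublyCommute (V1 V2 : ℝ≥0 → G →L[ℂ] G) : Prop :=
  SgCommute V1 V2 ∧ ∀ t s : ℝ≥0, V1 t ∘L adjoint (V2 s) = adjoint (V2 s) ∘L V1 t

/-- A completely nonunitary pair of semigroups: no nonzero closed subspace reduces both
semigroups in such a way that both restrict to unitary semigroups. -/
def IsCnuPair (V1 V2 : ℝ≥0 → G →L[ℂ] G) : Prop :=
  ∀ L : Submodule ℂ G, IsClosed (L : Set G) → ReducedBy V1 L → ReducedBy V2 L →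
    IsUnitarySemigroupOn V1 L → IsUnitarySemigroupOn V2 L → L = ⊥

/-- A strongly continuous one-parameter unitary group. -/
def IsUnitaryGroup (U : ℝ → G →L[ℂ] G) : Prop :=
  U 0 = 1 ∧ (∀ s t : ℝ, U (s + t) = U s ∘L U t) ∧
  (∀ (t : ℝ) (x : G), ‖U t x‖ = ‖x‖) ∧ (∀ t : ℝ, Function.Surjective (U t)) ∧
  ∀ x : G, Continuous fun t : ℝ => U t x

/-- Two subspaces are mutually orthogonal. -/
def OrthoSubspaces (A B : Submodule ℂ G) : Prop :=
  ∀ x ∈ A, ∀ y ∈ B, ⟪x, y⟫_ℂ = 0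

end SemigroupDefs

/-- The closed first quadrant `ℝ₊² ⊆ ℝ²`. -/
def QQ : Set (ℝ × ℝ) := {p | 0 ≤ p.1 ∧ 0 ≤ p.2}

/-- Lebesgue measure on `ℝ²` restricted to the quadrant `ℝ₊²`; `Lp F 2 nuQ` plays the
role of `L²(ℝ₊², F)`. -/
def nuQ : Measure (ℝ × ℝ) := (volume : Measure (ℝ × ℝ)).restrict QQ

/-- Lebesgue measure on `ℝ²` restricted to `ℝ² ∖ ℝ₊²`; `Lp F 2 nuQc` plays the role of
`L²(ℝ² ∖ ℝ₊², F)`. -/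
def nuQc : Measure (ℝ × ℝ) := (volume : Measure (ℝ × ℝ)).restrict QQᶜ

/-- `(V1, V2)` is a bishift-semigroup: it is jointly unitarily equivalent to the pair
`(𝒮₁^F, 𝒮₂^F)` of shift semigroups on `L²(ℝ₊², F)` for some Hilbert space `F`. -/
def IsBishiftPair {G : Type} [NormedAddCommGroup G] [InnerProductSpace ℂ G] [CompleteSpace G]
    (V1 V2 : ℝ≥0 → G →L[ℂ] G) : Prop :=
  ∃ (F : Type) (_ : NormedAddCommGroup F) (_ : InnerProductSpace ℂ F) (_ : CompleteSpace F)
    (Z : G ≃ₗᵢ[ℂ] Lp F 2 nuQ),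
    ∀ (t : ℝ≥0) (x : G),
      ((Z (V1 t x) : ℝ × ℝ → F) =ᵐ[nuQ]
        fun p => if (t : ℝ) ≤ p.1 then (Z x : ℝ × ℝ → F) (p.1 - (t : ℝ), p.2) else 0) ∧
      ((Z (V2 t x) : ℝ × ℝ → F) =ᵐ[nuQ]
        fun p => if (t : ℝ) ≤ p.2 then (Z x : ℝ × ℝ → F) (p.1, p.2 - (t : ℝ)) else 0)

/-- `(U1, U2)` on the ambient space `G` is a minimal unitary extension of the commuting
pair of semigroups `(V1, V2)` living on the closed subspace `K` of `G`. -/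
def IsMinimalUnitaryExtension {G : Type} [NormedAddCommGroup G] [InnerProductSpace ℂ G]
    [CompleteSpace G] (K : Submodule ℂ G) (V1 V2 : ℝ≥0 → ↥K →L[ℂ] ↥K)
    (U1 U2 : ℝ → G →L[ℂ] G) : Prop :=
  IsUnitaryGroup U1 ∧ IsUnitaryGroup U2 ∧
  (∀ s t : ℝ, U1 s ∘L U2 t = U2 t ∘L U1 s) ∧
  (∀ (t : ℝ≥0) (h : ↥K),
    U1 (t : ℝ) (h : G) = (V1 t h : G) ∧ U2 (t : ℝ) (h : G) = (V2 t h : G)) ∧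
  (Submodule.span ℂ
    {x : G | ∃ (t s : ℝ) (h : ↥K), x = U1 t (U2 s (h : G))}).topologicalClosure = ⊤

/-- The dual pair of `(V1, V2)` (with respect to the minimal unitary extension `(U1, U2)`
of `(V1, V2)` living on `Kᗮ`, given by `Ṽⱼ,t = (Ūⱼ,t)* |_{Kᗮ}`) is doubly commuting:
`Ṽ₁,t Ṽ₂,s = Ṽ₂,s Ṽ₁,t` and `Ṽ₁,t (Ṽ₂,s)* = (Ṽ₂,s)* Ṽ₁,t`.  Here `(Ṽ₂,s)* x`, for
`x ∈ Kᗮ`, is characterised as the unique `w ∈ Kᗮ` with `U2 s x - w ∈ K`. -/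
def DualDoublyCommutes {G : Type} [NormedAddCommGroup G] [InnerProductSpace ℂ G]
    [CompleteSpace G] (K : Submodule ℂ G) (U1 U2 : ℝ → G →L[ℂ] G) : Prop :=
  ∀ t s : ℝ, 0 ≤ t → 0 ≤ s → ∀ x ∈ Kᗮ,
    (adjoint (U1 t) (adjoint (U2 s) x) = adjoint (U2 s) (adjoint (U1 t) x)) ∧
    ∀ w w' : G, w ∈ Kᗮ → U2 s x - w ∈ K → w' ∈ Kᗮ →
      U2 s (adjoint (U1 t) x) - w' ∈ K → adjoint (U1 t) w = w'

/-- The restriction of the semigroup `V` to an invariant subspace `L`. -/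
def SGRestrict {G : Type} [NormedAddCommGroup G] [InnerProductSpace ℂ G]
    (V : ℝ≥0 → G →L[ℂ] G) (L : Submodule ℂ G)
    (hL : ∀ t : ℝ≥0, ∀ x ∈ L, V t x ∈ L) : ℝ≥0 → ↥L →L[ℂ] ↥L := fun t =>
  { toLinearMap := (V t).toLinearMap.restrict (fun x hx => hL t x hx)
    cont := Continuous.subtype_mk ((V t).continuous.comp continuous_subtype_val) _ }

/-- The dual of the pair extended by the unitary groups `(U1, U2)`, i.e. the pair
`(Ṽ₁, Ṽ₂)` on `Kᗮ` given by `Ṽⱼ,t = (Ūⱼ,t)*|_{Kᗮ}`, is a bishift-semigroup: there is a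
unitary `Z : Kᗮ → L²(ℝ₊², F)` carrying `(Ṽ₁, Ṽ₂)` to the pair of shift semigroups. -/
def DualIsBishift {G : Type} [NormedAddCommGroup G] [InnerProductSpace ℂ G]
    [CompleteSpace G] (K : Submodule ℂ G) (U1 U2 : ℝ → G →L[ℂ] G) : Prop :=
  ∃ (F : Type) (_ : NormedAddCommGroup F) (_ : InnerProductSpace ℂ F) (_ : CompleteSpace F)
    (Z : ↥Kᗮ ≃ₗᵢ[ℂ] Lp F 2 nuQ),
    ∀ t : ℝ, 0 ≤ t → ∀ f g : Lp F 2 nuQ,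
      (((g : ℝ × ℝ → F) =ᵐ[nuQ]
          fun p => if t ≤ p.1 then (f : ℝ × ℝ → F) (p.1 - t, p.2) else 0) →
        adjoint (U1 t) (Z.symm f : G) = (Z.symm g : G)) ∧
      (((g : ℝ × ℝ → F) =ᵐ[nuQ]
          fun p => if t ≤ p.2 then (f : ℝ × ℝ → F) (p.1, p.2 - t) else 0) →
        adjoint (U2 t) (Z.symm f : G) = (Z.symm g : G))

/-- `(V1, V2)` is a modified-bishift-semigroup: a completely nonunitary commuting pair of
C₀-semigroups of isometries whose dual (with respect to a minimal unitary extension) is a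
bishift-semigroup. -/
def IsModifiedBishift {G : Type} [NormedAddCommGroup G] [InnerProductSpace ℂ G]
    [CompleteSpace G] (V1 V2 : ℝ≥0 → G →L[ℂ] G) : Prop :=
  IsIsometrySemigroup V1 ∧ IsIsometrySemigroup V2 ∧ SgCommute V1 V2 ∧ IsCnuPair V1 V2 ∧
  ∃ (Ebar : Type) (_ : NormedAddCommGroup Ebar) (_ : InnerProductSpace ℂ Ebar)
    (_ : CompleteSpace Ebar) (J : G →ₗᵢ[ℂ] Ebar) (U1 U2 : ℝ → Ebar →L[ℂ] Ebar),
    IsUnitaryGroup U1 ∧ IsUnitaryGroup U2 ∧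
    (∀ s t : ℝ, U1 s ∘L U2 t = U2 t ∘L U1 s) ∧
    (∀ (t : ℝ≥0) (x : G), U1 (t : ℝ) (J x) = J (V1 t x) ∧ U2 (t : ℝ) (J x) = J (V2 t x)) ∧
    (Submodule.span ℂ
      {y : Ebar | ∃ (t s : ℝ) (x : G), y = U1 t (U2 s (J x))}).topologicalClosure = ⊤ ∧
    DualIsBishift (LinearMap.range J.toLinearMap) U1 U2

/-!
The dual `(W₁, W₂)` lives on `Kᗮ` and is a doubly commuting pair of isometric semigroups. The
continuous Wold decomposition of `W₁` and of `W₂` therefore splits `Kᗮ` into the unitary parts of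
`W₁` and `W₂` and a part generated by the vectors that `W₁_t†` and `W₂_t†` both multiply by
`e^{-t}`. The Gram matrix of the orbits of these vectors is that of the exponentials `e^{-x₁-x₂} n`
under the shifts, which identifies this last part with `L²(ℝ₊², F)`. By minimality the two unitary
parts meet trivially, and double commutativity makes them orthogonal.

Each of the three parts `S` of `Kᗮ` generates a subspace of the ambient space that reduces both
unitary groups, and its intersection with `K` reduces `V₁` and `V₂`. The bishift part yields the
modified bishift, and the unitary parts of `W₁` and `W₂` yield the summands on which `V₁`,
respectively `V₂`, is unitary and the other semigroup is completely nonunitary. A vector of `K`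
orthogonal to all three intersections has an orbit orthogonal to all of `Kᗮ`, so that orbit never
leaves `K` and both semigroups are unitary there.
-/

theorem setIntegral_Ioi_comp_add_right {E : Type*} [NormedAddCommGroup E] [NormedSpace ℝ E]
    (f : ℝ → E) (a c : ℝ) : ∫ s in Set.Ioi a, f (s + c) = ∫ s in Set.Ioi (a + c), f s := by
  have := (measurePreserving_add_right (volume : Measure ℝ) c).setIntegral_preimage_emb
    (measurableEmbedding_addRight c) f (Set.Ioi (a + c))
  rwa [Set.preimage_add_const_Ioi, add_sub_cancel_right] at this

-- When `r` is the resolvent at `x`, the right-hand side is the defect of the cogenerator and the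
-- left-hand side is the derivative of `‖C t r‖ ^ 2` at `0`.
theorem two_mul_re_inner_sub_self {E : Type*} [NormedAddCommGroup E]
    [InnerProductSpace ℂ E] (r x : E) :
    2 * RCLike.re ⟪r, r - x⟫_ℂ = (‖x - (2 : ℂ) • r‖ ^ 2 - ‖x‖ ^ 2) / 2 := by
  rw [@norm_sub_sq ℂ, inner_smul_right, norm_smul, inner_sub_right, map_sub,
    ← norm_sq_eq_re_inner, ← inner_re_symm x]
  norm_num
  ring

section ContractionSemigroups

variable {E : Type} [NormedAddCommGroup E] [InnerProductSpace ℂ E]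

/-- A C₀-semigroup of contractions. Unlike isometric semigroups, these are closed under taking
adjoints. -/
def IsContractionSemigroup (C : ℝ≥0 → E →L[ℂ] E) : Prop :=
  IsC0Semigroup C ∧ ∀ (t : ℝ≥0) (x : E), ‖C t x‖ ≤ ‖x‖

namespace IsC0Semigroup

variable {C : ℝ≥0 → E →L[ℂ] E}

theorem zero_apply (h : IsC0Semigroup C) (x : E) : C 0 x = x := by
  simp [h.1]

theorem add_apply (h : IsC0Semigroup C) (s t : ℝ≥0) (x : E) : C (s + t) x = C s (C t x) := by
  simp [h.2.1]

theorem continuous_apply (h : IsC0Semigroup C) (x : E) : Continuous fun t => C t x :=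
  h.2.2 x

theorem apply_comm (h : IsC0Semigroup C) (s t : ℝ≥0) (x : E) : C s (C t x) = C t (C s x) := by
  rw [← h.add_apply, add_comm, h.add_apply]

end IsC0Semigroup

theorem IsIsometrySemigroup.isContractionSemigroup {V : ℝ≥0 → E →L[ℂ] E}
    (h : IsIsometrySemigroup V) : IsContractionSemigroup V :=
  ⟨h.1, fun t x => (h.2 t x).le⟩

/-- The orbit `s ↦ e^{-s} C_s x`, whose integral over `[0, ∞)` is the resolvent at `1` of the
generator of `C`. -/
def discountedOrbit (C : ℝ≥0 → E →L[ℂ] E) (x : E) (s : ℝ) : E :=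
  Real.exp (-s) • C s.toNNReal x

namespace IsContractionSemigroup

variable {C : ℝ≥0 → E →L[ℂ] E}

theorem continuous_discountedOrbit (h : IsContractionSemigroup C) (x : E) :
    Continuous (discountedOrbit C x) := by
  have := (h.1.continuous_apply x).comp continuous_real_toNNReal
  exact (Real.continuous_exp.comp continuous_neg).smul this

theorem norm_discountedOrbit_le (h : IsContractionSemigroup C) (x : E) (s : ℝ) :
    ‖discountedOrbit C x s‖ ≤ Real.exp (-s) * ‖x‖ := by
  rw [discountedOrbit, norm_smul, Real.norm_eq_abs, Real.abs_exp]
  gcongr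
  exact h.2 _ _

theorem integrableOn_discountedOrbit (h : IsContractionSemigroup C) (x : E) :
    IntegrableOn (discountedOrbit C x) (Set.Ioi 0) :=
  ((integrableOn_exp_neg_Ioi 0).mul_const ‖x‖).mono'
    (h.continuous_discountedOrbit x).aestronglyMeasurable
    (.of_forall (h.norm_discountedOrbit_le x))

theorem norm_integral_discountedOrbit_le (h : IsContractionSemigroup C) (x : E) :
    ‖∫ s in Set.Ioi 0, discountedOrbit C x s‖ ≤ 1 * ‖x‖ := by
  rw [← integral_exp_neg_Ioi_zero, ← integral_mul_const]
  exact MeasureTheory.norm_integral_le_of_norm_le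
    ((integrableOn_exp_neg_Ioi 0).mul_const ‖x‖) (.of_forall (h.norm_discountedOrbit_le x))

theorem map_discountedOrbit (h : IsContractionSemigroup C) (x : E) (t : ℝ≥0) (s : ℝ) :
    C t (discountedOrbit C x s) = discountedOrbit C (C t x) s := by
  rw [discountedOrbit, discountedOrbit, map_smul_of_tower, h.1.apply_comm]

theorem discountedOrbit_apply_eq_exp_smul (h : IsContractionSemigroup C) (x : E) {s t : ℝ}
    (hs : 0 ≤ s) (ht : 0 ≤ t) :
    discountedOrbit C (C t.toNNReal x) s = Real.exp t • discountedOrbit C x (s + t) := by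
  rw [discountedOrbit, discountedOrbit, Real.toNNReal_add hs ht, h.1.add_apply, smul_smul,
    ← Real.exp_add]
  congr 2
  ring

/-- The resolvent `(1 - A)⁻¹` of the generator `A` of a contraction semigroup. -/
def resolvent (h : IsContractionSemigroup C) : E →L[ℂ] E :=
  LinearMap.mkContinuous
    { toFun x := ∫ s in Set.Ioi 0, discountedOrbit C x s
      map_add' x y := by
        rw [← integral_add (h.integrableOn_discountedOrbit x) (h.integrableOn_discountedOrbit y)]
        simp [discountedOrbit]
      map_smul' c x := by
        rw [RingHom.id_apply, ← integral_smul]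
        simp [discountedOrbit, smul_comm c] }
    1 h.norm_integral_discountedOrbit_le

theorem resolvent_apply (h : IsContractionSemigroup C) (x : E) :
    h.resolvent x = ∫ s in Set.Ioi 0, discountedOrbit C x s :=
  rfl

/-- The cogenerator `(A + 1)(A - 1)⁻¹` of a contraction semigroup with generator `A`, written in
terms of the resolvent. -/
def cogenerator (h : IsContractionSemigroup C) : E →L[ℂ] E :=
  1 - (2 : ℂ) • h.resolvent

theorem cogenerator_apply (h : IsContractionSemigroup C) (x : E) :
    h.cogenerator x = x - (2 : ℂ) • h.resolvent x :=
  rfl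

end IsContractionSemigroup

variable [CompleteSpace E]

namespace IsContractionSemigroup

variable {C : ℝ≥0 → E →L[ℂ] E}

theorem norm_adjoint_apply_le (h : IsContractionSemigroup C) (t : ℝ≥0) (x : E) :
    ‖adjoint (C t) x‖ ≤ ‖x‖ := by
  have hle : ‖adjoint (C t)‖ ≤ 1 := by
    rw [LinearIsometryEquiv.norm_map]
    exact (C t).opNorm_le_bound zero_le_one fun y => by simpa using h.2 t y
  simpa using (adjoint (C t)).le_of_opNorm_le hle x

theorem adjoint_apply_add (h : IsContractionSemigroup C) (s t : ℝ≥0) (x : E) :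
    adjoint (C (s + t)) x = adjoint (C s) (adjoint (C t) x) := by
  rw [add_comm, h.1.2.1, adjoint_comp, comp_apply]

theorem norm_adjoint_sub_adjoint_le (h : IsContractionSemigroup C) (s t : ℝ≥0) (x : E) :
    ‖adjoint (C s) x - adjoint (C t) x‖ ≤ ‖adjoint (C (nndist s t)) x - x‖ := by
  wlog hst : t ≤ s generalizing s t
  · rw [norm_sub_rev, nndist_comm]
    exact this t s (le_of_not_ge hst)
  have hs : s = t + nndist s t := by
    rw [NNReal.nndist_eq, tsub_eq_zero_of_le hst, max_eq_left zero_le,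
      add_tsub_cancel_of_le hst]
  conv_lhs => rw [hs, h.adjoint_apply_add, ← map_sub]
  exact h.norm_adjoint_apply_le t _

theorem norm_adjoint_sub_self_sq_le (h : IsContractionSemigroup C) (t : ℝ≥0) (x : E) :
    ‖adjoint (C t) x - x‖ ^ 2 ≤ 2 * ‖x‖ ^ 2 - 2 * RCLike.re ⟪x, C t x⟫_ℂ := by
  have hle : ‖adjoint (C t) x‖ ^ 2 ≤ ‖x‖ ^ 2 :=
    pow_le_pow_left₀ (norm_nonneg _) (h.norm_adjoint_apply_le t x) 2
  rw [@norm_sub_sq ℂ, adjoint_inner_left]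
  linarith

theorem continuous_adjoint_apply (h : IsContractionSemigroup C) (x : E) :
    Continuous fun t : ℝ≥0 => adjoint (C t) x := by
  have hbound : Filter.Tendsto (fun t : ℝ≥0 => 2 * ‖x‖ ^ 2 - 2 * RCLike.re ⟪x, C t x⟫_ℂ)
      (nhds 0) (nhds 0) := by
    have hcont : Continuous fun t : ℝ≥0 => 2 * ‖x‖ ^ 2 - 2 * RCLike.re ⟪x, C t x⟫_ℂ := by
      have := h.1.continuous_apply x
      fun_prop
    simpa only [h.1.zero_apply, ← norm_sq_eq_re_inner, sub_self] using hcont.tendsto 0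
  have hzero : Filter.Tendsto (fun t : ℝ≥0 => ‖adjoint (C t) x - x‖) (nhds 0) (nhds 0) := by
    have hsq := squeeze_zero (fun t => sq_nonneg _) (h.norm_adjoint_sub_self_sq_le · x) hbound
    simpa using hsq.sqrt
  refine continuous_iff_continuousAt.2 fun t => tendsto_iff_norm_sub_tendsto_zero.2 ?_
  refine squeeze_zero (fun _ => norm_nonneg _) (h.norm_adjoint_sub_adjoint_le · t x) ?_
  refine hzero.comp ?_
  simpa using (continuous_id.nndist (continuous_const (y := t))).tendsto t

protected theorem adjoint (h : IsContractionSemigroup C) :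
    IsContractionSemigroup fun t => adjoint (C t) := by
  refine ⟨⟨?_, fun s t => ?_, h.continuous_adjoint_apply⟩, h.norm_adjoint_apply_le⟩
  · simp only [h.1.1, ← star_eq_adjoint, star_one]
  · ext x
    exact h.adjoint_apply_add s t x

theorem resolvent_comm (h : IsContractionSemigroup C) (t : ℝ≥0) (x : E) :
    C t (h.resolvent x) = h.resolvent (C t x) := by
  rw [resolvent_apply, ← (C t).integral_comp_comm (h.integrableOn_discountedOrbit x)]
  simp only [h.map_discountedOrbit, resolvent_apply]

theorem adjoint_resolvent (h : IsContractionSemigroup C) :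
    adjoint h.resolvent = h.adjoint.resolvent := by
  refine ((eq_adjoint_iff _ _).2 fun x y => ?_).symm
  rw [resolvent_apply, resolvent_apply, ← inner_conj_symm,
    ← integral_inner (h.adjoint.integrableOn_discountedOrbit x), ← integral_conj,
    ← integral_inner (h.integrableOn_discountedOrbit y)]
  congr 1 with s
  rw [inner_conj_symm, discountedOrbit, discountedOrbit, ← Complex.coe_smul, ← Complex.coe_smul,
    inner_smul_left, inner_smul_right, adjoint_inner_left, Complex.conj_ofReal]

theorem apply_resolvent_eq (h : IsContractionSemigroup C) (x : E) {t : ℝ} (ht : 0 ≤ t) :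
    C t.toNNReal (h.resolvent x) =
      Real.exp t • (h.resolvent x - ∫ s in (0 : ℝ)..t, discountedOrbit C x s) := by
  have hshift : ∫ s in Set.Ioi 0, discountedOrbit C (C t.toNNReal x) s =
      Real.exp t • ∫ s in Set.Ioi t, discountedOrbit C x s := by
    rw [setIntegral_congr_fun measurableSet_Ioi fun s hs =>
      h.discountedOrbit_apply_eq_exp_smul x (le_of_lt hs) ht, integral_smul,
      setIntegral_Ioi_comp_add_right, zero_add]
  rw [resolvent_comm, resolvent_apply, hshift, resolvent_apply,
    ← intervalIntegral.integral_interval_add_Ioi (h.integrableOn_discountedOrbit x)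
      ((h.integrableOn_discountedOrbit x).mono_set (Set.Ioi_subset_Ioi ht)), add_sub_cancel_left]

theorem hasDerivWithinAt_apply_resolvent (h : IsContractionSemigroup C) (x : E) {t : ℝ}
    (ht : 0 ≤ t) :
    HasDerivWithinAt (fun s : ℝ => C s.toNNReal (h.resolvent x))
      (C t.toNNReal (h.resolvent x - x)) (Set.Ici t) t := by
  have hcont := h.continuous_discountedOrbit x
  have hint : HasDerivAt (fun s : ℝ => ∫ r in (0 : ℝ)..s, discountedOrbit C x r)
      (discountedOrbit C x t) t :=
    intervalIntegral.integral_hasDerivAt_right (hcont.intervalIntegrable _ _)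
      (hcont.stronglyMeasurableAtFilter _ _) hcont.continuousAt
  have hprod := ((Real.hasDerivAt_exp t).smul (hint.const_sub (h.resolvent x))).hasDerivWithinAt
    (s := Set.Ici t)
  refine (hprod.congr_of_mem (fun s hs => h.apply_resolvent_eq x (ht.trans hs))
    Set.self_mem_Ici).congr_deriv ?_
  rw [← h.apply_resolvent_eq x ht, discountedOrbit, smul_neg, smul_smul, ← Real.exp_add,
    add_neg_cancel, Real.exp_zero, one_smul, map_sub, neg_add_eq_sub]

theorem adjoint_cogenerator (h : IsContractionSemigroup C) :
    adjoint h.cogenerator = h.adjoint.cogenerator := by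
  rw [cogenerator, cogenerator, ← adjoint_resolvent, map_sub, map_smulₛₗ, Complex.conj_ofNat,
    ← star_eq_adjoint, star_one]

theorem hasDerivWithinAt_norm_sq_apply_resolvent (h : IsContractionSemigroup C) (x : E) {t : ℝ}
    (ht : 0 ≤ t) :
    HasDerivWithinAt (fun s : ℝ => ‖C s.toNNReal (h.resolvent x)‖ ^ 2)
      ((‖h.cogenerator (C t.toNNReal x)‖ ^ 2 - ‖C t.toNNReal x‖ ^ 2) / 2) (Set.Ici t) t := by
  let _ : InnerProductSpace ℝ E := InnerProductSpace.complexToReal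
  refine (h.hasDerivWithinAt_apply_resolvent x ht).norm_sq.congr_deriv ?_
  rw [cogenerator_apply, ← two_mul_re_inner_sub_self, map_sub, resolvent_comm]
  rfl

theorem norm_apply_resolvent_of_norm_cogenerator (h : IsContractionSemigroup C) {x : E}
    (hx : ∀ s, ‖h.cogenerator (C s x)‖ = ‖C s x‖) (t : ℝ≥0) :
    ‖C t (h.resolvent x)‖ = ‖h.resolvent x‖ := by
  have hcont : Continuous fun s : ℝ => ‖C s.toNNReal (h.resolvent x)‖ ^ 2 :=
    ((h.1.continuous_apply _).comp continuous_real_toNNReal).norm.pow 2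
  have hconst := constant_of_has_deriv_right_zero (b := t) hcont.continuousOn
    (fun s hs => (h.hasDerivWithinAt_norm_sq_apply_resolvent x hs.1).congr_deriv (by
      rw [hx, sub_self, zero_div])) t (by simp)
  simpa [h.1.zero_apply] using hconst

theorem apply_eq_exp_neg_smul_of_cogenerator_eq_zero (h : IsContractionSemigroup C) {x : E}
    (hx : h.cogenerator x = 0) (t : ℝ≥0) : C t x = (Real.exp (-t) : ℂ) • x := by
  have hx' : (2 : ℂ) • h.resolvent x = x := (sub_eq_zero.1 hx).symm
  have hres : h.resolvent x - x = -h.resolvent x := by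
    nth_rw 2 [← hx']
    rw [two_smul, sub_add_cancel_left]
  have hcont : Continuous fun s : ℝ => Real.exp s • C s.toNNReal (h.resolvent x) :=
    Real.continuous_exp.smul ((h.1.continuous_apply _).comp continuous_real_toNNReal)
  have hconst := constant_of_has_deriv_right_zero (b := t) hcont.continuousOn (fun s hs =>
    ((Real.hasDerivAt_exp s).hasDerivWithinAt.smul
      (h.hasDerivWithinAt_apply_resolvent x hs.1)).congr_deriv (by
        rw [hres, map_neg, smul_neg, neg_add_cancel])) t (by simp)
  have hexp : C t (h.resolvent x) = (Real.exp (-t) : ℂ) • h.resolvent x := by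
    simp only [Real.toNNReal_coe, Real.toNNReal_zero, Real.exp_zero, one_smul,
      h.1.zero_apply] at hconst
    conv_rhs => rw [Complex.coe_smul, ← hconst, smul_smul, ← Real.exp_add, neg_add_cancel,
      Real.exp_zero, one_smul]
  rw [← hx', map_smul, hexp, smul_comm]

end IsContractionSemigroup

end ContractionSemigroups

section Wold

variable {E : Type} [NormedAddCommGroup E] [InnerProductSpace ℂ E] [CompleteSpace E]

/-- The wandering space of a continuous Wold decomposition. For the shift on `L²(ℝ₊, F)` it
consists of the functions `e^{-x} n`, so it is the kernel of the adjoint of the cogenerator. -/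
def defectSpace (V : ℝ≥0 → E →L[ℂ] E) : Submodule ℂ E where
  carrier := {x | ∀ t : ℝ≥0, adjoint (V t) x = (Real.exp (-t) : ℂ) • x}
  add_mem' hx hy t := by rw [map_add, hx t, hy t, smul_add]
  zero_mem' t := by simp
  smul_mem' c x hx t := by rw [map_smul, hx t, smul_comm]

/-- The vectors in the range of every `V t`, for an isometric semigroup `V`; this is the unitary
summand of the Wold decomposition. -/
def unitaryPart (V : ℝ≥0 → E →L[ℂ] E) : Submodule ℂ E where
  carrier := {x | ∀ t : ℝ≥0, V t (adjoint (V t) x) = x}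
  add_mem' hx hy t := by rw [map_add, map_add, hx t, hy t]
  zero_mem' t := by simp
  smul_mem' c x hx t := by rw [map_smul, map_smul, hx t]

theorem isClosed_defectSpace (V : ℝ≥0 → E →L[ℂ] E) : IsClosed (defectSpace V : Set E) := by
  change IsClosed {x | ∀ t : ℝ≥0, adjoint (V t) x = (Real.exp (-t) : ℂ) • x}
  simp only [Set.ofPred_forall]
  exact isClosed_iInter fun t => isClosed_eq (by fun_prop) (by fun_prop)

theorem isClosed_unitaryPart (V : ℝ≥0 → E →L[ℂ] E) : IsClosed (unitaryPart V : Set E) := by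
  change IsClosed {x | ∀ t : ℝ≥0, V t (adjoint (V t) x) = x}
  simp only [Set.ofPred_forall]
  exact isClosed_iInter fun t => isClosed_eq (by fun_prop) (by fun_prop)

namespace IsIsometrySemigroup

variable {V : ℝ≥0 → E →L[ℂ] E}

theorem adjoint_apply_apply (h : IsIsometrySemigroup V) (t : ℝ≥0) (x : E) :
    adjoint (V t) (V t x) = x :=
  congr($((norm_map_iff_adjoint_comp_self (V t)).1 (h.2 t)) x)

theorem adjoint_apply_apply_add (h : IsIsometrySemigroup V) (s t : ℝ≥0) (x : E) :
    adjoint (V s) (V (s + t) x) = V t x := by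
  rw [h.1.add_apply, h.adjoint_apply_apply]

theorem norm_sub_apply_adjoint_sq (h : IsIsometrySemigroup V) (t : ℝ≥0) (x : E) :
    ‖x - V t (adjoint (V t) x)‖ ^ 2 = ‖x‖ ^ 2 - ‖adjoint (V t) x‖ ^ 2 := by
  rw [@norm_sub_sq ℂ, h.2, ← adjoint_inner_left, ← norm_sq_eq_re_inner]
  ring

theorem mem_unitaryPart_iff_norm_adjoint (h : IsIsometrySemigroup V) {x : E} :
    x ∈ unitaryPart V ↔ ∀ t, ‖adjoint (V t) x‖ = ‖x‖ := by
  refine forall_congr' fun t => ?_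
  rw [eq_comm, ← sub_eq_zero, ← norm_eq_zero, ← sq_eq_zero_iff, h.norm_sub_apply_adjoint_sq,
    sub_eq_zero, sq_eq_sq₀ (norm_nonneg _) (norm_nonneg _), eq_comm]

theorem reducedBy_unitaryPart (h : IsIsometrySemigroup V) : ReducedBy V (unitaryPart V) := by
  refine ⟨fun t x hx s => ?_, fun t x hx s => ?_⟩
  · obtain ⟨y, rfl⟩ : ∃ y, V s y = x := ⟨_, hx s⟩
    rw [h.1.apply_comm t s, h.adjoint_apply_apply]
  · have hst := hx (t + s)
    rw [h.1.add_apply] at hst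
    rw [← hst, h.adjoint_apply_apply, h.adjoint_apply_apply]

theorem norm_cogenerator (h : IsIsometrySemigroup V) (x : E) :
    ‖h.isContractionSemigroup.cogenerator x‖ = ‖x‖ := by
  have hderiv := h.isContractionSemigroup.hasDerivWithinAt_norm_sq_apply_resolvent x le_rfl
  simp only [h.2, Real.toNNReal_zero, h.1.zero_apply] at hderiv
  have hzero := (uniqueDiffOn_Ici (0 : ℝ) 0 Set.self_mem_Ici).eq_deriv _ hderiv
    (hasDerivWithinAt_const 0 _ _)
  rw [← sq_eq_sq₀ (norm_nonneg _) (norm_nonneg _)]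
  linarith

theorem adjoint_cogenerator_apply_cogenerator (h : IsIsometrySemigroup V) (x : E) :
    adjoint h.isContractionSemigroup.cogenerator (h.isContractionSemigroup.cogenerator x) = x :=
  congr($((norm_map_iff_adjoint_comp_self _).1 h.norm_cogenerator) x)

theorem mem_defectSpace_of_adjoint_cogenerator_eq_zero (h : IsIsometrySemigroup V) {x : E}
    (hx : adjoint h.isContractionSemigroup.cogenerator x = 0) : x ∈ defectSpace V :=
  h.isContractionSemigroup.adjoint.apply_eq_exp_neg_smul_of_cogenerator_eq_zero
    (by rwa [← IsContractionSemigroup.adjoint_cogenerator])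

theorem norm_adjoint_cogenerator_of_orthogonal (h : IsIsometrySemigroup V) {x : E}
    (hx : ∀ n ∈ defectSpace V, ⟪x, n⟫_ℂ = 0) :
    ‖adjoint h.isContractionSemigroup.cogenerator x‖ = ‖x‖ := by
  set T := h.isContractionSemigroup.cogenerator
  have hmem : x - T (adjoint T x) ∈ defectSpace V :=
    h.mem_defectSpace_of_adjoint_cogenerator_eq_zero
      (by rw [map_sub, h.adjoint_cogenerator_apply_cogenerator, sub_self])
  have hinner := hx _ hmem
  rw [inner_sub_right, ← adjoint_inner_left, inner_self_eq_norm_sq_to_K,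
    inner_self_eq_norm_sq_to_K, sub_eq_zero] at hinner
  rw [← sq_eq_sq₀ (norm_nonneg _) (norm_nonneg _)]
  exact_mod_cast hinner.symm

/-- The continuous Wold decomposition. Orthogonality to the orbit of the defect space makes the
adjoint of the cogenerator isometric along the orbit of `x` under `V†`, hence `V†` isometric on the
resolvent of `x`; and `x` is recovered from that resolvent by differentiation at `0`. -/
theorem mem_unitaryPart_of_orthogonal (h : IsIsometrySemigroup V) {x : E}
    (hx : ∀ t, ∀ n ∈ defectSpace V, ⟪x, V t n⟫_ℂ = 0) : x ∈ unitaryPart V := by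
  have hC := h.isContractionSemigroup.adjoint
  have hnorm : ∀ s, ‖hC.cogenerator (adjoint (V s) x)‖ = ‖adjoint (V s) x‖ := fun s => by
    rw [← IsContractionSemigroup.adjoint_cogenerator]
    exact h.norm_adjoint_cogenerator_of_orthogonal fun n hn => by
      rw [adjoint_inner_left, hx s n hn]
  have hw : hC.resolvent x ∈ unitaryPart V :=
    h.mem_unitaryPart_iff_norm_adjoint.2 (hC.norm_apply_resolvent_of_norm_cogenerator hnorm)
  have hderiv : hC.resolvent x - x ∈ unitaryPart V := by
    have hd := hC.hasDerivWithinAt_apply_resolvent x le_rfl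
    rw [Real.toNNReal_zero, hC.1.zero_apply] at hd
    intro t
    have hPd := ((V t ∘L adjoint (V t)).restrictScalars ℝ).hasFDerivAt.comp_hasDerivWithinAt 0 hd
    refine (uniqueDiffOn_Ici (0 : ℝ) 0 Set.self_mem_Ici).eq_deriv _ (hPd.congr_of_mem ?_ ?_) hd
    · exact fun s _ => (h.reducedBy_unitaryPart.2 _ _ hw t).symm
    · exact Set.self_mem_Ici
  simpa using sub_mem hw hderiv

theorem inner_defectSpace_unitaryPart (h : IsIsometrySemigroup V) {n u : E}
    (hn : n ∈ defectSpace V) (hu : u ∈ unitaryPart V) : ⟪n, u⟫_ℂ = 0 := by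
  have hbound : ∀ t : ℝ≥0, ‖⟪n, u⟫_ℂ‖ ≤ Real.exp (-t) * (‖n‖ * ‖u‖) := fun t => by
    have hle := norm_inner_le_norm (𝕜 := ℂ) (adjoint (V t) n) (adjoint (V t) u)
    rwa [adjoint_inner_left, hu t, hn t, norm_smul, Complex.norm_real, Real.norm_eq_abs,
      Real.abs_exp, h.mem_unitaryPart_iff_norm_adjoint.1 hu, mul_assoc] at hle
  have hlim : Filter.Tendsto (fun t : ℝ≥0 => Real.exp (-t) * (‖n‖ * ‖u‖)) .atTop (nhds 0) := by
    have hexp := Real.tendsto_exp_neg_atTop_nhds_zero.comp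
      (NNReal.tendsto_coe_atTop.2 Filter.tendsto_id)
    simpa using hexp.mul_const (‖n‖ * ‖u‖)
  exact norm_le_zero_iff.1 (ge_of_tendsto' hlim hbound)

end IsIsometrySemigroup

end Wold

section ClosedSpan

variable {𝕜 E F : Type*} [RCLike 𝕜] [NormedAddCommGroup E] [InnerProductSpace 𝕜 E]
  [NormedAddCommGroup F] [NormedSpace 𝕜 F]

theorem map_mem_of_mem_topologicalClosure_span {s : Set E} (A : E →L[𝕜] F) {M : Submodule 𝕜 F}
    (hM : IsClosed (M : Set F)) (h : ∀ x ∈ s, A x ∈ M) {x : E}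
    (hx : x ∈ (Submodule.span 𝕜 s).topologicalClosure) : A x ∈ M :=
  Submodule.topologicalClosure_minimal _ (t := M.comap A.toLinearMap) (Submodule.span_le.2 h)
    (hM.preimage A.continuous) hx

theorem inner_eq_zero_of_mem_topologicalClosure_span {s : Set E} {x y : E}
    (h : ∀ x ∈ s, ⟪x, y⟫_𝕜 = 0) (hx : x ∈ (Submodule.span 𝕜 s).topologicalClosure) :
    ⟪x, y⟫_𝕜 = 0 := by
  have hle : (Submodule.span 𝕜 s).topologicalClosure ≤ (Submodule.span 𝕜 {y})ᗮ :=
    Submodule.topologicalClosure_minimal _ (Submodule.span_le.2 fun z hz =>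
      Submodule.mem_orthogonal_singleton_iff_inner_left.2 (h z hz))
      (Submodule.isClosed_orthogonal _)
  exact Submodule.mem_orthogonal_singleton_iff_inner_left.1 (hle hx)

end ClosedSpan

section DoublyCommuting

variable {E : Type} [NormedAddCommGroup E] [InnerProductSpace ℂ E] [CompleteSpace E]

namespace ReducedBy

variable {V : ℝ≥0 → E →L[ℂ] E} {L M : Submodule ℂ E}

protected theorem orthogonal (h : ReducedBy V L) : ReducedBy V Lᗮ := by
  refine ⟨fun t x hx y hy => ?_, fun t x hx y hy => ?_⟩
  · rw [← adjoint_inner_left]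
    exact hx _ (h.2 t y hy)
  · rw [adjoint_inner_right]
    exact hx _ (h.1 t y hy)

protected theorem sup (hL : ReducedBy V L) (hM : ReducedBy V M) : ReducedBy V (L ⊔ M) := by
  have hsup (A : E →L[ℂ] E) (hAL : ∀ x ∈ L, A x ∈ L) (hAM : ∀ x ∈ M, A x ∈ M) :
      ∀ x ∈ L ⊔ M, A x ∈ L ⊔ M := fun x hx => by
    obtain ⟨y, hy, z, hz, rfl⟩ := Submodule.mem_sup.1 hx
    rw [map_add]
    exact Submodule.add_mem_sup (hAL y hy) (hAM z hz)
  exact ⟨fun t => hsup (V t) (hL.1 t) (hM.1 t), fun t => hsup _ (hL.2 t) (hM.2 t)⟩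

theorem starProjection_apply [L.HasOrthogonalProjection] (h : ReducedBy V L) (t : ℝ≥0) (x : E) :
    L.starProjection (V t x) = V t (L.starProjection x) := by
  refine Submodule.eq_starProjection_of_mem_orthogonal (h.1 t _ (L.starProjection_apply_mem x)) ?_
  rw [← map_sub]
  exact h.orthogonal.1 t _ (L.sub_starProjection_mem_orthogonal x)

theorem starProjection_adjoint_apply [L.HasOrthogonalProjection] (h : ReducedBy V L) (t : ℝ≥0)
    (x : E) : L.starProjection (adjoint (V t) x) = adjoint (V t) (L.starProjection x) := by
  refine Submodule.eq_starProjection_of_mem_orthogonal (h.2 t _ (L.starProjection_apply_mem x)) ?_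
  rw [← map_sub]
  exact h.orthogonal.2 t _ (L.sub_starProjection_mem_orthogonal x)

theorem starProjection_mem_unitaryPart [L.HasOrthogonalProjection] (h : ReducedBy V L) {x : E}
    (hx : x ∈ unitaryPart V) : L.starProjection x ∈ unitaryPart V := fun t => by
  rw [← h.starProjection_adjoint_apply, ← h.starProjection_apply, hx t]

theorem starProjection_mem_defectSpace [L.HasOrthogonalProjection] (h : ReducedBy V L) {x : E}
    (hx : x ∈ defectSpace V) : L.starProjection x ∈ defectSpace V := fun t => by
  rw [← h.starProjection_adjoint_apply, hx t, map_smul]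

end ReducedBy

instance (V : ℝ≥0 → E →L[ℂ] E) : CompleteSpace (defectSpace V) :=
  (isClosed_defectSpace V).completeSpace_coe

instance (V : ℝ≥0 → E →L[ℂ] E) : CompleteSpace (unitaryPart V) :=
  (isClosed_unitaryPart V).completeSpace_coe

/-- The multiplicity space of the bishift part of a doubly commuting pair. -/
abbrev jointDefectSpace (W₁ W₂ : ℝ≥0 → E →L[ℂ] E) : Submodule ℂ E :=
  defectSpace W₁ ⊓ defectSpace W₂

/-- The closed span of the vectors `W₁_t W₂_s n`, where `n` runs through the joint defect space;
for a doubly commuting pair of isometric semigroups this is the summand that is a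
bishift-semigroup. -/
def bishiftPart (W₁ W₂ : ℝ≥0 → E →L[ℂ] E) : Submodule ℂ E :=
  (Submodule.span ℂ {x | ∃ t s, ∃ n ∈ jointDefectSpace W₁ W₂,
    W₁ t (W₂ s n) = x}).topologicalClosure

variable {W₁ W₂ : ℝ≥0 → E →L[ℂ] E}

theorem isClosed_bishiftPart : IsClosed (bishiftPart W₁ W₂ : Set E) :=
  Submodule.isClosed_topologicalClosure _

instance : CompleteSpace (bishiftPart W₁ W₂) :=
  isClosed_bishiftPart.completeSpace_coe

theorem apply_apply_mem_bishiftPart (t s : ℝ≥0) {n : E}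
    (hn : n ∈ jointDefectSpace W₁ W₂) : W₁ t (W₂ s n) ∈ bishiftPart W₁ W₂ :=
  Submodule.le_topologicalClosure _ (Submodule.subset_span ⟨t, s, n, hn, rfl⟩)

namespace SgDoublyCommute

theorem apply_comm (h : SgDoublyCommute W₁ W₂) (t s : ℝ≥0) (x : E) :
    W₁ t (W₂ s x) = W₂ s (W₁ t x) :=
  congr($(h.1 t s) x)

theorem apply_adjoint_comm (h : SgDoublyCommute W₁ W₂) (t s : ℝ≥0) (x : E) :
    W₁ t (adjoint (W₂ s) x) = adjoint (W₂ s) (W₁ t x) :=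
  congr($(h.2 t s) x)

theorem symm (h : SgDoublyCommute W₁ W₂) : SgDoublyCommute W₂ W₁ := by
  refine ⟨fun t s => (h.1 s t).symm, fun t s => ?_⟩
  simpa only [adjoint_comp, adjoint_adjoint] using congr(adjoint $(h.2 s t))

theorem adjoint_comm (h : SgDoublyCommute W₁ W₂) (t s : ℝ≥0) (x : E) :
    adjoint (W₁ t) (adjoint (W₂ s) x) = adjoint (W₂ s) (adjoint (W₁ t) x) := by
  rw [← comp_apply, ← comp_apply, ← adjoint_comp, ← adjoint_comp, h.1]

theorem reducedBy_unitaryPart (h : SgDoublyCommute W₁ W₂) : ReducedBy W₁ (unitaryPart W₂) :=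
  ⟨fun t x hx s => by rw [← h.apply_adjoint_comm, ← h.apply_comm, hx s],
    fun t x hx s => by rw [← h.adjoint_comm, h.symm.apply_adjoint_comm, hx s]⟩

theorem reducedBy_defectSpace (h : SgDoublyCommute W₁ W₂) : ReducedBy W₁ (defectSpace W₂) :=
  ⟨fun t x hx s => by rw [← h.apply_adjoint_comm, hx s, map_smul],
    fun t x hx s => by rw [← h.adjoint_comm, hx s, map_smul]⟩

theorem bishiftPart_comm (h : SgDoublyCommute W₁ W₂) : bishiftPart W₁ W₂ = bishiftPart W₂ W₁ := by
  unfold bishiftPart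
  congr 2 with x
  rw [Set.mem_ofPred_eq, Set.mem_ofPred_eq, exists_comm, jointDefectSpace, inf_comm]
  simp only [h.apply_comm]

theorem reducedBy_bishiftPart_left (h₁ : IsIsometrySemigroup W₁) (h : SgDoublyCommute W₁ W₂) :
    ReducedBy W₁ (bishiftPart W₁ W₂) := by
  refine ⟨fun r x => map_mem_of_mem_topologicalClosure_span _ isClosed_bishiftPart ?_,
    fun r x => map_mem_of_mem_topologicalClosure_span _ isClosed_bishiftPart ?_⟩
  · rintro _ ⟨t, s, n, hn, rfl⟩
    rw [← h₁.1.add_apply]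
    exact apply_apply_mem_bishiftPart _ _ hn
  · rintro _ ⟨t, s, n, hn, rfl⟩
    obtain ⟨a, rfl⟩ | ⟨a, rfl⟩ : (∃ a, t = r + a) ∨ ∃ a, r = t + a :=
      (le_total r t).imp exists_add_of_le exists_add_of_le
    · rw [h₁.adjoint_apply_apply_add]
      exact apply_apply_mem_bishiftPart _ _ hn
    · rw [add_comm, h₁.isContractionSemigroup.adjoint_apply_add, h₁.adjoint_apply_apply,
        ← h.symm.apply_adjoint_comm, hn.1 a, map_smul, ← h₁.1.zero_apply (W₂ s n)]
      exact Submodule.smul_mem _ _ (apply_apply_mem_bishiftPart _ _ hn)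

theorem reducedBy_bishiftPart_right (h₂ : IsIsometrySemigroup W₂) (h : SgDoublyCommute W₁ W₂) :
    ReducedBy W₂ (bishiftPart W₁ W₂) :=
  h.bishiftPart_comm ▸ reducedBy_bishiftPart_left h₂ h.symm

theorem inner_bishiftPart_unitaryPart_left (h₁ : IsIsometrySemigroup W₁)
    (h : SgDoublyCommute W₁ W₂) {x u : E} (hx : x ∈ bishiftPart W₁ W₂) (hu : u ∈ unitaryPart W₁) :
    ⟪x, u⟫_ℂ = 0 := by
  refine inner_eq_zero_of_mem_topologicalClosure_span ?_ hx
  rintro _ ⟨t, s, n, hn, rfl⟩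
  rw [← adjoint_inner_right, ← adjoint_inner_right]
  exact h₁.inner_defectSpace_unitaryPart hn.1
    (h.symm.reducedBy_unitaryPart.2 s _ (h₁.reducedBy_unitaryPart.2 t u hu))

theorem inner_bishiftPart_unitaryPart_right (h₂ : IsIsometrySemigroup W₂)
    (h : SgDoublyCommute W₁ W₂) {x u : E} (hx : x ∈ bishiftPart W₁ W₂) (hu : u ∈ unitaryPart W₂) :
    ⟪x, u⟫_ℂ = 0 :=
  inner_bishiftPart_unitaryPart_left h₂ h.symm (h.bishiftPart_comm ▸ hx) hu

theorem inner_unitaryPart_unitaryPart (h : SgDoublyCommute W₁ W₂)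
    (hdisj : Disjoint (unitaryPart W₁) (unitaryPart W₂)) {x y : E} (hx : x ∈ unitaryPart W₁)
    (hy : y ∈ unitaryPart W₂) : ⟪x, y⟫_ℂ = 0 := by
  have hproj : (unitaryPart W₂).starProjection x = 0 :=
    Submodule.disjoint_def.1 hdisj _
      (h.reducedBy_unitaryPart.starProjection_mem_unitaryPart hx)
      (Submodule.starProjection_apply_mem _ x)
  exact Submodule.inner_left_of_mem_orthogonal hy
    ((Submodule.starProjection_apply_eq_zero_iff _).1 hproj)

-- For such `x` the vector `P W₁_t† x`, with `P` the projection onto the defect space of `W₁`, lies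
-- in the unitary part of `W₂` and therefore vanishes.
theorem eq_zero_of_orthogonal (h₁ : IsIsometrySemigroup W₁) (h₂ : IsIsometrySemigroup W₂)
    (h : SgDoublyCommute W₁ W₂) {x : E} (hx : ∀ y ∈ bishiftPart W₁ W₂, ⟪x, y⟫_ℂ = 0)
    (hx₁ : ∀ y ∈ unitaryPart W₁, ⟪x, y⟫_ℂ = 0) (hx₂ : ∀ y ∈ unitaryPart W₂, ⟪x, y⟫_ℂ = 0) :
    x = 0 := by
  set P := (defectSpace W₁).starProjection
  have hred : ReducedBy W₂ (defectSpace W₁) := h.symm.reducedBy_defectSpace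
  have hPmem (y : E) : P y ∈ defectSpace W₁ := Submodule.starProjection_apply_mem _ y
  have hunitary (t : ℝ≥0) : P (adjoint (W₁ t) x) ∈ unitaryPart W₂ := by
    refine h₂.mem_unitaryPart_of_orthogonal fun s n hn => ?_
    rw [Submodule.inner_starProjection_left_eq_right, hred.starProjection_apply,
      adjoint_inner_left]
    exact hx _ (apply_apply_mem_bishiftPart t s ⟨hPmem n, hred.starProjection_mem_defectSpace hn⟩)
  have hzero (t : ℝ≥0) : P (adjoint (W₁ t) x) = 0 := by
    rw [← inner_self_eq_zero (𝕜 := ℂ), Submodule.inner_starProjection_left_eq_right,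
      Submodule.starProjection_eq_self_iff.2 (hPmem _), adjoint_inner_left]
    exact hx₂ _ (h.reducedBy_unitaryPart.1 t _ (hunitary t))
  have hmem : x ∈ unitaryPart W₁ := h₁.mem_unitaryPart_of_orthogonal fun t n hn => by
    rw [← adjoint_inner_left]
    exact Submodule.inner_left_of_mem_orthogonal hn
      ((Submodule.starProjection_apply_eq_zero_iff _).1 (hzero t))
  exact inner_self_eq_zero.1 (hx₁ x hmem)

end SgDoublyCommute

end DoublyCommuting

section Gram

variable {𝕜 ι E F : Type*} [RCLike 𝕜]
  [NormedAddCommGroup E] [InnerProductSpace 𝕜 E] [CompleteSpace E]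
  [NormedAddCommGroup F] [InnerProductSpace 𝕜 F] [CompleteSpace F]

theorem denseRange_linearCombination {a : ι → E} (ha : ∀ y, (∀ i, ⟪a i, y⟫_𝕜 = 0) → y = 0) :
    DenseRange (Finsupp.linearCombination 𝕜 a) := by
  refine (Submodule.dense_iff_topologicalClosure_eq_top
    (s := LinearMap.range (Finsupp.linearCombination 𝕜 a))).2 ?_
  rw [Submodule.topologicalClosure_eq_top_iff, Finsupp.range_linearCombination,
    Submodule.eq_bot_iff]
  exact fun y hy => ha y fun i =>
    (Submodule.mem_orthogonal _ y).1 hy _ (Submodule.subset_span ⟨i, rfl⟩)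

theorem exists_linearIsometryEquiv_of_inner_eq {a : ι → E} {b : ι → F}
    (ha : ∀ y, (∀ i, ⟪a i, y⟫_𝕜 = 0) → y = 0) (hb : ∀ y, (∀ i, ⟪b i, y⟫_𝕜 = 0) → y = 0)
    (h : ∀ i j, ⟪a i, a j⟫_𝕜 = ⟪b i, b j⟫_𝕜) : ∃ Z : E ≃ₗᵢ[𝕜] F, ∀ i, Z (a i) = b i := by
  have hinner (x y : ι →₀ 𝕜) :
      ⟪Finsupp.linearCombination 𝕜 a x, Finsupp.linearCombination 𝕜 a y⟫_𝕜 =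
        ⟪Finsupp.linearCombination 𝕜 b x, Finsupp.linearCombination 𝕜 b y⟫_𝕜 := by
    simp only [Finsupp.linearCombination_apply, Finsupp.sum_inner, Finsupp.inner_sum,
      inner_smul_left, inner_smul_right, h]
  have hnorm (x : ι →₀ 𝕜) : ‖Finsupp.linearCombination 𝕜 b (LinearEquiv.refl 𝕜 _ x)‖ =
      ‖Finsupp.linearCombination 𝕜 a x‖ := by
    rw [LinearEquiv.refl_apply, norm_eq_sqrt_re_inner (𝕜 := 𝕜), ← hinner,
      ← norm_eq_sqrt_re_inner]
  refine ⟨(LinearEquiv.refl 𝕜 (ι →₀ 𝕜)).extendOfIsometry _ _ (denseRange_linearCombination ha)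
    (denseRange_linearCombination hb) hnorm, fun i => ?_⟩
  simpa using (LinearEquiv.refl 𝕜 (ι →₀ 𝕜)).extendOfIsometry_eq _ _
    (denseRange_linearCombination ha) (denseRange_linearCombination hb) hnorm (Finsupp.single i 1)

end Gram

section Quadrants

theorem QQ_eq_Ici_prod_Ici : QQ = Set.Ici (0 : ℝ) ×ˢ Set.Ici (0 : ℝ) := rfl

theorem measurableSet_QQ : MeasurableSet QQ :=
  measurableSet_Ici.prod measurableSet_Ici

theorem nuQ_eq_prod :
    nuQ = (volume.restrict (Set.Ici (0 : ℝ))).prod (volume.restrict (Set.Ici (0 : ℝ))) := by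
  rw [nuQ, QQ_eq_Ici_prod_Ici, Measure.prod_restrict, Measure.volume_eq_prod]

theorem ae_mem_QQ : ∀ᵐ p ∂nuQ, p ∈ QQ :=
  ae_restrict_mem measurableSet_QQ

theorem isCountablySpanning_range_Ici : IsCountablySpanning (Set.range (Set.Ici : ℝ → Set ℝ)) := by
  refine ⟨fun n : ℕ => Set.Ici (-(n : ℝ)), fun n => ⟨_, rfl⟩, Set.iUnion_eq_univ_iff.2 fun x => ?_⟩
  exact (exists_nat_ge (-x)).imp fun n hn => neg_le.1 hn

theorem generateFrom_image2_prod_range_Ici : (inferInstance : MeasurableSpace (ℝ × ℝ)) =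
    .generateFrom (Set.image2 (· ×ˢ ·) (Set.range Set.Ici) (Set.range Set.Ici)) := by
  have hgen : .generateFrom (Set.range Set.Ici) = (inferInstance : MeasurableSpace ℝ) :=
    (borel_eq_generateFrom_Ici ℝ).symm.trans BorelSpace.measurable_eq.symm
  exact (generateFrom_eq_prod hgen hgen isCountablySpanning_range_Ici
    isCountablySpanning_range_Ici).symm

variable {F : Type*} [NormedAddCommGroup F] [NormedSpace ℝ F] {μ : Measure (ℝ × ℝ)} {k : ℝ × ℝ → F}

theorem integral_eq_zero_of_setIntegral_Ici_prod_Ici (hk : Integrable k μ)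
    (h : ∀ a b : ℝ, ∫ p in Set.Ici a ×ˢ Set.Ici b, k p ∂μ = 0) : ∫ p, k p ∂μ = 0 := by
  have hunion : ⋃ n : ℕ, Set.Ici (-(n : ℝ)) ×ˢ Set.Ici (-(n : ℝ)) = Set.univ := by
    refine Set.iUnion_eq_univ_iff.2 fun p => (exists_nat_ge (max (-p.1) (-p.2))).imp fun n hn => ?_
    exact ⟨neg_le.1 ((le_max_left _ _).trans hn), neg_le.1 ((le_max_right _ _).trans hn)⟩
  have hmono : Monotone fun n : ℕ => Set.Ici (-(n : ℝ)) ×ˢ Set.Ici (-(n : ℝ)) := fun m n hmn =>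
    have hIci := Set.Ici_subset_Ici.2 (neg_le_neg (Nat.cast_le (α := ℝ).2 hmn))
    Set.prod_mono hIci hIci
  have hlim := tendsto_setIntegral_of_monotone
    (fun n : ℕ => measurableSet_Ici.prod measurableSet_Ici) hmono hk.integrableOn
  rw [hunion, setIntegral_univ] at hlim
  simp only [h] at hlim
  exact tendsto_nhds_unique hlim tendsto_const_nhds

theorem ae_eq_zero_of_setIntegral_Ici_prod_Ici [CompleteSpace F] (hk : Integrable k μ)
    (h : ∀ a b : ℝ, ∫ p in Set.Ici a ×ˢ Set.Ici b, k p ∂μ = 0) : k =ᵐ[μ] 0 := by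
  suffices hall : ∀ S, MeasurableSet S → ∫ p in S, k p ∂μ = 0 from
    hk.ae_eq_zero_of_forall_setIntegral_eq_zero fun S hS _ => hall S hS
  intro S hS
  induction S, hS using MeasurableSpace.induction_on_inter generateFrom_image2_prod_range_Ici
    (isPiSystem_Ici.prod isPiSystem_Ici) with
  | empty => exact setIntegral_empty
  | basic S hS =>
    obtain ⟨_, ⟨a, rfl⟩, _, ⟨b, rfl⟩, rfl⟩ := hS
    exact h a b
  | compl S hS ih =>
    have hadd := integral_add_compl hS hk
    rwa [ih, zero_add, integral_eq_zero_of_setIntegral_Ici_prod_Ici hk h] at hadd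
  | iUnion f hdisj hmeas ih =>
    have hsum := hasSum_integral_iUnion hmeas hdisj (hk.integrableOn (s := ⋃ i, f i))
    simp only [ih] at hsum
    exact hsum.unique hasSum_zero

end Quadrants

section QuadrantModel

/-- The exponential `√2 e^{-(x - a)}` cut off to `x ≥ a`: the translate by `a` of the unit vector
of `L²(ℝ₊)` that spans the defect space of the unilateral shift semigroup. -/
def truncExp (a : ℝ≥0) (x : ℝ) : ℝ :=
  (Set.Ici (a : ℝ)).indicator (fun x => √2 * Real.exp (a - x)) x

theorem measurable_truncExp (a : ℝ≥0) : Measurable (truncExp a) :=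
  Measurable.indicator (by fun_prop) measurableSet_Ici

theorem truncExp_mul_truncExp (a b : ℝ≥0) : (fun x => truncExp a x * truncExp b x) =
    (Set.Ici (max a b : ℝ)).indicator fun x => 2 * Real.exp (a + b) * Real.exp (-2 * x) := by
  ext x
  rw [truncExp, truncExp, ← Set.Ici_inter_Ici, ← Set.inter_indicator_mul]
  congr 1
  ext y
  rw [mul_mul_mul_comm, Real.mul_self_sqrt zero_le_two, mul_assoc, ← Real.exp_add, ← Real.exp_add]
  congr 2
  ring

theorem integrable_truncExp_mul_truncExp (a b : ℝ≥0) :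
    Integrable fun x => truncExp a x * truncExp b x := by
  rw [truncExp_mul_truncExp, integrable_indicator_iff measurableSet_Ici,
    integrableOn_Ici_iff_integrableOn_Ioi]
  exact (integrableOn_exp_mul_Ioi (by norm_num) _).const_mul _

theorem setIntegral_truncExp_mul_truncExp (a b : ℝ≥0) :
    ∫ x in Set.Ici 0, truncExp a x * truncExp b x = Real.exp (-|(a : ℝ) - b|) := by
  rw [truncExp_mul_truncExp, setIntegral_indicator measurableSet_Ici,
    Set.inter_eq_right.2 (Set.Ici_subset_Ici.2 (le_max_of_le_left a.coe_nonneg)),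
    integral_Ici_eq_integral_Ioi, integral_const_mul, integral_exp_mul_Ioi (by norm_num),
    show 2 * Real.exp (a + b) * (-Real.exp (-2 * max (a : ℝ) b) / -2) =
      Real.exp (a + b) * Real.exp (-2 * max (a : ℝ) b) by ring, ← Real.exp_add]
  congr 1
  linarith [max_sub_min_eq_abs' (a : ℝ) b, max_add_min (a : ℝ) b]

-- Only one of the two truncated differences is nonzero.
theorem truncExp_add (a t : ℝ≥0) {x : ℝ} (hx : 0 ≤ x) :
    truncExp a (x + t) = Real.exp (-(t - a : ℝ≥0)) * truncExp (a - t) x := by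
  obtain ⟨r, rfl⟩ | ⟨r, rfl⟩ := (le_total a t).imp exists_add_of_le exists_add_of_le
  · have ha : x + (a + r : ℝ≥0) ∈ Set.Ici (a : ℝ) := by
      rw [NNReal.coe_add, Set.mem_Ici]
      linarith [r.coe_nonneg]
    rw [add_tsub_cancel_left, tsub_eq_zero_of_le le_self_add, truncExp, truncExp,
      Set.indicator_of_mem ha, Set.indicator_of_mem (Set.mem_Ici.2 (by simpa using hx)),
      mul_left_comm, ← Real.exp_add]
    congr 2
    push_cast
    ring
  · rw [add_tsub_cancel_left, tsub_eq_zero_of_le le_self_add, NNReal.coe_zero, neg_zero,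
      Real.exp_zero, one_mul, truncExp, truncExp]
    simp only [Set.indicator, Set.mem_Ici, NNReal.coe_add, add_comm x, add_le_add_iff_left,
      add_sub_add_left_eq_sub]

theorem exp_mul_truncExp (a : ℝ≥0) (x : ℝ) :
    Real.exp (-a) * truncExp a x = (Set.Ici (a : ℝ)).indicator (truncExp 0) x := by
  by_cases hx : x ∈ Set.Ici (a : ℝ)
  · have hx₀ : x ∈ Set.Ici ((0 : ℝ≥0) : ℝ) := a.coe_nonneg.trans hx
    rw [truncExp, Set.indicator_of_mem hx, Set.indicator_of_mem hx, truncExp,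
      Set.indicator_of_mem hx₀, mul_left_comm, ← Real.exp_add, NNReal.coe_zero]
    congr 2
    ring
  · rw [truncExp, Set.indicator_of_notMem hx, Set.indicator_of_notMem hx, mul_zero]

theorem truncExp_zero_pos {x : ℝ} (hx : 0 ≤ x) : 0 < truncExp 0 x := by
  rw [truncExp, Set.indicator_of_mem (Set.mem_Ici.2 (by simpa using hx))]
  positivity

variable {F : Type*} [NormedAddCommGroup F]

/-- The function `f` on the quadrant, extended by zero and translated by `q`. -/
def quadrantShift (q : ℝ × ℝ) (f : ℝ × ℝ → F) (p : ℝ × ℝ) : F :=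
  QQ.indicator f (p - q)

theorem quadrantShift_left_ae_eq (t : ℝ) (f : ℝ × ℝ → F) :
    (fun p => if t ≤ p.1 then f (p.1 - t, p.2) else 0) =ᵐ[nuQ] quadrantShift (t, 0) f := by
  filter_upwards [ae_mem_QQ] with p hp
  have hsub : p - (t, 0) = (p.1 - t, p.2) := Prod.ext rfl (sub_zero _)
  simp [quadrantShift, Set.indicator, QQ, hsub, hp.2]

theorem quadrantShift_right_ae_eq (t : ℝ) (f : ℝ × ℝ → F) :
    (fun p => if t ≤ p.2 then f (p.1, p.2 - t) else 0) =ᵐ[nuQ] quadrantShift (0, t) f := by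
  filter_upwards [ae_mem_QQ] with p hp
  have hsub : p - (0, t) = (p.1, p.2 - t) := Prod.ext (sub_zero _) rfl
  simp [quadrantShift, Set.indicator, QQ, hsub, hp.1]

theorem integral_quadrantShift [NormedSpace ℝ F] {q : ℝ × ℝ} (hq : q ∈ QQ) (f : ℝ × ℝ → F) :
    ∫ p, quadrantShift q f p ∂nuQ = ∫ p, f p ∂nuQ := by
  have hsupp (p : ℝ × ℝ) (hp : p ∉ QQ) : quadrantShift q f p = 0 :=
    Set.indicator_of_notMem (fun hpq => hp
      ⟨hq.1.trans (sub_nonneg.1 hpq.1), hq.2.trans (sub_nonneg.1 hpq.2)⟩) f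
  rw [nuQ, setIntegral_eq_integral_of_forall_compl_eq_zero hsupp,
    ← integral_indicator measurableSet_QQ]
  exact integral_sub_right_eq_self (QQ.indicator f) q

variable [InnerProductSpace ℂ F]

theorem memLp_truncExp_mul_truncExp_smul (a b : ℝ≥0) (n : F) :
    MemLp (fun p : ℝ × ℝ => ((truncExp a p.1 * truncExp b p.2 : ℝ) : ℂ) • n) 2 nuQ := by
  have hmeas : Measurable fun p : ℝ × ℝ => truncExp a p.1 * truncExp b p.2 :=
    ((measurable_truncExp a).comp measurable_fst).mul ((measurable_truncExp b).comp measurable_snd)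
  have hcoe : Measurable fun p : ℝ × ℝ => ((truncExp a p.1 * truncExp b p.2 : ℝ) : ℂ) :=
    Complex.measurable_ofReal.comp hmeas
  refine (memLp_two_iff_integrable_sq_norm
    (hcoe.stronglyMeasurable.smul_const n).aestronglyMeasurable).2 ?_
  rw [nuQ_eq_prod]
  refine (((integrable_truncExp_mul_truncExp a a).restrict.mul_prod
    (integrable_truncExp_mul_truncExp b b).restrict).mul_const (‖n‖ ^ 2)).congr (.of_forall ?_)
  intro p
  simp only [norm_smul, Complex.norm_real, mul_pow, Real.norm_eq_abs, sq_abs]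
  ring

/-- The vector `(x₁, x₂) ↦ 2 e^{-(x₁ - a)} e^{-(x₂ - b)} n` of `L²(ℝ₊², F)`, cut off to
`x₁ ≥ a`, `x₂ ≥ b`; these vectors are the translates of the joint defect space of the bishift. -/
def quadrantExp (a b : ℝ≥0) (n : F) : Lp F 2 nuQ :=
  (memLp_truncExp_mul_truncExp_smul a b n).toLp

theorem coeFn_quadrantExp (a b : ℝ≥0) (n : F) : (quadrantExp a b n : ℝ × ℝ → F) =ᵐ[nuQ]
    fun p => ((truncExp a p.1 * truncExp b p.2 : ℝ) : ℂ) • n :=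
  (memLp_truncExp_mul_truncExp_smul a b n).coeFn_toLp

theorem inner_quadrantExp (g : Lp F 2 nuQ) (a b : ℝ≥0) (n : F) : ⟪quadrantExp a b n, g⟫_ℂ =
    ∫ p, ((truncExp a p.1 * truncExp b p.2 : ℝ) : ℂ) * ⟪n, g p⟫_ℂ ∂nuQ := by
  rw [L2.inner_def]
  refine integral_congr_ae ?_
  filter_upwards [coeFn_quadrantExp a b n] with p hp
  rw [hp, inner_smul_left, Complex.conj_ofReal]

theorem inner_quadrantExp_quadrantExp (a b a' b' : ℝ≥0) (n m : F) :
    ⟪quadrantExp a b n, quadrantExp a' b' m⟫_ℂ =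
      ((Real.exp (-|(a : ℝ) - a'|) : ℝ) : ℂ) * (Real.exp (-|(b : ℝ) - b'|) : ℝ) * ⟪n, m⟫_ℂ := by
  have hae : (fun p : ℝ × ℝ => ((truncExp a p.1 * truncExp b p.2 : ℝ) : ℂ) *
      ⟪n, quadrantExp a' b' m p⟫_ℂ) =ᵐ[nuQ] fun p => (((truncExp a p.1 * truncExp a' p.1) *
        (truncExp b p.2 * truncExp b' p.2) : ℝ) : ℂ) * ⟪n, m⟫_ℂ := by
    filter_upwards [coeFn_quadrantExp a' b' m] with p hp
    rw [hp, inner_smul_right]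
    push_cast
    ring
  rw [inner_quadrantExp, integral_congr_ae hae, integral_mul_const, integral_complex_ofReal,
    nuQ_eq_prod, integral_prod_mul (fun x => truncExp a x * truncExp a' x)
      fun x => truncExp b x * truncExp b' x, setIntegral_truncExp_mul_truncExp,
    setIntegral_truncExp_mul_truncExp, Complex.ofReal_mul]

theorem inner_quadrantExp_of_quadrantShift {f g : Lp F 2 nuQ} {t s : ℝ≥0}
    (hg : (g : ℝ × ℝ → F) =ᵐ[nuQ] quadrantShift (t, s) f) (a b : ℝ≥0) (n : F) :
    ⟪quadrantExp a b n, g⟫_ℂ = ((Real.exp (-(t - a : ℝ≥0)) : ℝ) : ℂ) *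
      (Real.exp (-(s - b : ℝ≥0)) : ℝ) * ⟪quadrantExp (a - t) (b - s) n, f⟫_ℂ := by
  let k (p : ℝ × ℝ) : ℂ := ((truncExp a (p.1 + t) * truncExp b (p.2 + s) : ℝ) : ℂ) * ⟪n, f p⟫_ℂ
  have hshift : (fun p : ℝ × ℝ => ((truncExp a p.1 * truncExp b p.2 : ℝ) : ℂ) * ⟪n, g p⟫_ℂ)
      =ᵐ[nuQ] quadrantShift (t, s) k := by
    filter_upwards [hg] with p hp
    rw [hp, quadrantShift, quadrantShift]
    by_cases hpq : p - ((t : ℝ), (s : ℝ)) ∈ QQ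
    · rw [Set.indicator_of_mem hpq, Set.indicator_of_mem hpq]
      simp [k]
    · rw [Set.indicator_of_notMem hpq, Set.indicator_of_notMem hpq, inner_zero_right, mul_zero]
  rw [inner_quadrantExp, integral_congr_ae hshift, integral_quadrantShift ⟨t.2, s.2⟩,
    inner_quadrantExp, ← integral_const_mul]
  refine integral_congr_ae ?_
  filter_upwards [ae_mem_QQ] with p hp
  simp only [k]
  rw [truncExp_add a t hp.1, truncExp_add b s hp.2]
  push_cast
  ring

theorem integrable_truncExp_zero_smul (g : Lp F 2 nuQ) :
    Integrable (fun p : ℝ × ℝ => ((truncExp 0 p.1 * truncExp 0 p.2 : ℝ) : ℂ) • g p) nuQ := by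
  have hmem : MemLp (fun p : ℝ × ℝ => ((truncExp 0 p.1 * truncExp 0 p.2 : ℝ) : ℂ)) 2 nuQ := by
    simpa using memLp_truncExp_mul_truncExp_smul 0 0 (1 : ℂ)
  exact memLp_one_iff_integrable.1 ((Lp.memLp g).smul hmem)

theorem inner_setIntegral_truncExp_zero_smul [CompleteSpace F] (g : Lp F 2 nuQ) (a b : ℝ≥0)
    (n : F) : ⟪n, ∫ p in Set.Ici (a : ℝ) ×ˢ Set.Ici (b : ℝ),
        ((truncExp 0 p.1 * truncExp 0 p.2 : ℝ) : ℂ) • g p ∂nuQ⟫_ℂ =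
      ((Real.exp (-a) * Real.exp (-b) : ℝ) : ℂ) * ⟪quadrantExp a b n, g⟫_ℂ := by
  rw [← integral_inner (integrable_truncExp_zero_smul g).integrableOn,
    ← integral_indicator (measurableSet_Ici.prod measurableSet_Ici), inner_quadrantExp,
    ← integral_const_mul]
  congr 1 with p
  rw [← mul_assoc, ← Complex.ofReal_mul, mul_mul_mul_comm, exp_mul_truncExp, exp_mul_truncExp]
  by_cases h₁ : p.1 ∈ Set.Ici (a : ℝ) <;> by_cases h₂ : p.2 ∈ Set.Ici (b : ℝ) <;>
    simp only [Set.indicator, Set.mem_prod, h₁, h₂, and_self, and_true, and_false, if_true,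
      if_false, inner_smul_right, mul_zero, zero_mul, Complex.ofReal_zero]

theorem eq_zero_of_inner_quadrantExp [CompleteSpace F] {g : Lp F 2 nuQ}
    (hg : ∀ a b n, ⟪quadrantExp a b n, g⟫_ℂ = 0) : g = 0 := by
  have hIci (a b : ℝ) : ∫ p in Set.Ici a ×ˢ Set.Ici b,
      ((truncExp 0 p.1 * truncExp 0 p.2 : ℝ) : ℂ) • g p ∂nuQ = 0 := by
    have hae : Set.Ici a ×ˢ Set.Ici b =ᵐ[nuQ]
        Set.Ici (a.toNNReal : ℝ) ×ˢ Set.Ici (b.toNNReal : ℝ) := by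
      filter_upwards [ae_mem_QQ] with p hp
      have hcut {c x : ℝ} (hx : 0 ≤ x) : x ∈ Set.Ici c ↔ x ∈ Set.Ici (c.toNNReal : ℝ) := by
        simp [hx]
      exact propext (and_congr (hcut hp.1) (hcut hp.2))
    rw [setIntegral_congr_set hae]
    exact ext_inner_left ℂ fun n => by
      rw [inner_setIntegral_truncExp_zero_smul, hg, mul_zero, inner_zero_right]
  rw [Lp.eq_zero_iff_ae_eq_zero]
  filter_upwards [ae_eq_zero_of_setIntegral_Ici_prod_Ici (integrable_truncExp_zero_smul g) hIci,
    ae_mem_QQ] with p hp hpQ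
  refine (smul_eq_zero.1 hp).resolve_left (Complex.ofReal_ne_zero.2 ?_)
  exact (mul_pos (truncExp_zero_pos hpQ.1) (truncExp_zero_pos hpQ.2)).ne'

end QuadrantModel

section BishiftModel

variable {E : Type} [NormedAddCommGroup E] [InnerProductSpace ℂ E] [CompleteSpace E]

namespace IsIsometrySemigroup

variable {V : ℝ≥0 → E →L[ℂ] E}

theorem adjoint_apply_of_mem_defectSpace (h : IsIsometrySemigroup V) (t a : ℝ≥0) {n : E}
    (hn : n ∈ defectSpace V) :
    adjoint (V t) (V a n) = ((Real.exp (-(t - a : ℝ≥0)) : ℝ) : ℂ) • V (a - t) n := by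
  obtain ⟨r, rfl⟩ | ⟨r, rfl⟩ := (le_total a t).imp exists_add_of_le exists_add_of_le
  · rw [add_tsub_cancel_left, tsub_eq_zero_of_le le_self_add, h.1.zero_apply, add_comm,
      h.isContractionSemigroup.adjoint_apply_add, h.adjoint_apply_apply, hn r]
  · rw [add_tsub_cancel_left, tsub_eq_zero_of_le le_self_add, h.adjoint_apply_apply_add,
      NNReal.coe_zero, neg_zero, Real.exp_zero, Complex.ofReal_one, one_smul]

theorem inner_apply_apply_of_mem_defectSpace (h : IsIsometrySemigroup V) (t a : ℝ≥0) {n m : E}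
    (hn : n ∈ defectSpace V) (hm : m ∈ defectSpace V) :
    ⟪V t n, V a m⟫_ℂ = ((Real.exp (-|(t : ℝ) - a|) : ℝ) : ℂ) * ⟪n, m⟫_ℂ := by
  rcases le_total a t with hat | hta
  · rw [← adjoint_inner_right, h.adjoint_apply_of_mem_defectSpace t a hm, inner_smul_right,
      tsub_eq_zero_of_le hat, h.1.zero_apply, NNReal.coe_sub hat,
      abs_of_nonneg (sub_nonneg.2 (NNReal.coe_le_coe.2 hat))]
  · rw [← adjoint_inner_left, h.adjoint_apply_of_mem_defectSpace a t hn, inner_smul_left,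
      Complex.conj_ofReal, tsub_eq_zero_of_le hta, h.1.zero_apply, NNReal.coe_sub hta,
      abs_sub_comm, abs_of_nonneg (sub_nonneg.2 (NNReal.coe_le_coe.2 hta))]

end IsIsometrySemigroup

variable {W₁ W₂ : ℝ≥0 → E →L[ℂ] E}

instance : CompleteSpace (jointDefectSpace W₁ W₂) :=
  ((isClosed_defectSpace W₁).inter (isClosed_defectSpace W₂)).completeSpace_coe

theorem eq_zero_of_inner_bishiftPart {y : bishiftPart W₁ W₂}
    (hy : ∀ t s, ∀ n ∈ jointDefectSpace W₁ W₂, ⟪W₁ t (W₂ s n), (y : E)⟫_ℂ = 0) :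
    y = 0 := by
  refine Subtype.ext (inner_self_eq_zero.1 (inner_eq_zero_of_mem_topologicalClosure_span ?_ y.2))
  rintro _ ⟨t, s, n, hn, rfl⟩
  exact hy t s n hn

namespace SgDoublyCommute

theorem exists_bishiftPart_equiv (h₁ : IsIsometrySemigroup W₁) (h₂ : IsIsometrySemigroup W₂)
    (h : SgDoublyCommute W₁ W₂) :
    ∃ Z : bishiftPart W₁ W₂ ≃ₗᵢ[ℂ] Lp (jointDefectSpace W₁ W₂) 2 nuQ,
      ∀ (t s : ℝ≥0) (n : jointDefectSpace W₁ W₂),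
        Z ⟨W₁ t (W₂ s n), apply_apply_mem_bishiftPart t s n.2⟩ = quadrantExp t s n := by
  obtain ⟨Z, hZ⟩ := exists_linearIsometryEquiv_of_inner_eq (𝕜 := ℂ)
    (ι := ℝ≥0 × ℝ≥0 × jointDefectSpace W₁ W₂)
    (a := fun i => (⟨W₁ i.1 (W₂ i.2.1 i.2.2), apply_apply_mem_bishiftPart i.1 i.2.1 i.2.2.2⟩ :
      bishiftPart W₁ W₂)) (b := fun i => quadrantExp i.1 i.2.1 i.2.2)
    (fun y hy => eq_zero_of_inner_bishiftPart fun t s n hn => hy (t, s, ⟨n, hn⟩))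
    (fun y hy => eq_zero_of_inner_quadrantExp fun t s n => hy (t, s, n))
    fun ⟨t, s, n⟩ ⟨t', s', m⟩ => by
      rw [inner_quadrantExp_quadrantExp, Submodule.coe_inner, Submodule.coe_inner,
        h₁.inner_apply_apply_of_mem_defectSpace _ _ (h.symm.reducedBy_defectSpace.1 s _ n.2.1)
          (h.symm.reducedBy_defectSpace.1 s' _ m.2.1),
        h₂.inner_apply_apply_of_mem_defectSpace _ _ n.2.2 m.2.2, mul_assoc]
  exact ⟨Z, fun t s n => hZ (t, s, n)⟩

theorem inner_apply_apply_of_mem_defectSpace (h₁ : IsIsometrySemigroup W₁)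
    (h₂ : IsIsometrySemigroup W₂) (h : SgDoublyCommute W₁ W₂) (t s a b : ℝ≥0) {n : E}
    (hn : n ∈ jointDefectSpace W₁ W₂) (x : E) :
    ⟪W₁ a (W₂ b n), W₁ t (W₂ s x)⟫_ℂ = ((Real.exp (-(t - a : ℝ≥0)) : ℝ) : ℂ) *
      (Real.exp (-(s - b : ℝ≥0)) : ℝ) * ⟪W₁ (a - t) (W₂ (b - s) n), x⟫_ℂ := by
  rw [← adjoint_inner_left, ← adjoint_inner_left,
    h₁.adjoint_apply_of_mem_defectSpace t a (h.symm.reducedBy_defectSpace.1 b n hn.1), map_smul,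
    ← h.apply_adjoint_comm, h₂.adjoint_apply_of_mem_defectSpace s b hn.2, map_smul,
    inner_smul_left, inner_smul_left, Complex.conj_ofReal, Complex.conj_ofReal, mul_assoc]

theorem exists_bishiftPart_equiv_quadrantShift (h₁ : IsIsometrySemigroup W₁)
    (h₂ : IsIsometrySemigroup W₂) (h : SgDoublyCommute W₁ W₂) :
    ∃ Z : bishiftPart W₁ W₂ ≃ₗᵢ[ℂ] Lp (jointDefectSpace W₁ W₂) 2 nuQ,
      ∀ (t s : ℝ≥0) (f g : Lp (jointDefectSpace W₁ W₂) 2 nuQ),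
        (g : ℝ × ℝ → jointDefectSpace W₁ W₂) =ᵐ[nuQ] quadrantShift (t, s) f →
          W₁ t (W₂ s (Z.symm f)) = Z.symm g := by
  obtain ⟨Z, hZ⟩ := h.exists_bishiftPart_equiv h₁ h₂
  have hinner (a b : ℝ≥0) {n : E} (hn : n ∈ jointDefectSpace W₁ W₂)
      (f : Lp (jointDefectSpace W₁ W₂) 2 nuQ) :
      ⟪W₁ a (W₂ b n), (Z.symm f : E)⟫_ℂ = ⟪quadrantExp a b ⟨n, hn⟩, f⟫_ℂ := by
    rw [← hZ, ← Z.symm.inner_map_map, Z.symm_apply_apply, Submodule.coe_inner]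
  refine ⟨Z, fun t s f g hg => ?_⟩
  have hmem : W₁ t (W₂ s (Z.symm f)) ∈ bishiftPart W₁ W₂ :=
    (h.reducedBy_bishiftPart_left h₁).1 t _
      ((h.reducedBy_bishiftPart_right h₂).1 s _ (Z.symm f).2)
  refine congrArg Subtype.val (sub_eq_zero.1 (eq_zero_of_inner_bishiftPart
    (y := ⟨_, hmem⟩ - Z.symm g) fun a b n hn => ?_))
  rw [Submodule.coe_sub, inner_sub_right, h.inner_apply_apply_of_mem_defectSpace h₁ h₂ t s a b hn,
    hinner _ _ hn, hinner _ _ hn, inner_quadrantExp_of_quadrantShift hg, sub_self]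

end SgDoublyCommute

end BishiftModel

section UnitaryExtension

variable {G : Type} [NormedAddCommGroup G] [InnerProductSpace ℂ G]

namespace IsUnitaryGroup

variable {U : ℝ → G →L[ℂ] G}

theorem zero_apply (h : IsUnitaryGroup U) (x : G) : U 0 x = x :=
  congr($(h.1) x)

theorem add_apply (h : IsUnitaryGroup U) (s t : ℝ) (x : G) : U (s + t) x = U s (U t x) :=
  congr($(h.2.1 s t) x)

theorem apply_apply_neg (h : IsUnitaryGroup U) (t : ℝ) (x : G) : U t (U (-t) x) = x := by
  rw [← h.add_apply, add_neg_cancel, h.zero_apply]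

protected theorem neg (h : IsUnitaryGroup U) : IsUnitaryGroup fun t => U (-t) :=
  ⟨by simp only [neg_zero, h.1], fun s t => by simp only [neg_add, h.2.1], fun t => h.2.2.1 (-t),
    fun t => h.2.2.2.1 (-t), fun x => (h.2.2.2.2 x).comp continuous_neg⟩

variable [CompleteSpace G]

theorem adjoint_eq (h : IsUnitaryGroup U) (t : ℝ) : adjoint (U t) = U (-t) := by
  have hiso := (norm_map_iff_adjoint_comp_self (U t)).1 (h.2.2.1 t)
  ext x
  nth_rw 1 [← h.apply_apply_neg t x]
  exact congr($hiso (U (-t) x))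

theorem inner_apply_left (h : IsUnitaryGroup U) (t : ℝ) (x y : G) :
    ⟪U t x, y⟫_ℂ = ⟪x, U (-t) y⟫_ℂ := by
  rw [← h.adjoint_eq, adjoint_inner_right]

end IsUnitaryGroup

/-- The restriction of the group `U` to an invariant subspace `M`. -/
def groupRestrict (U : ℝ → G →L[ℂ] G) (M : Submodule ℂ G) (hM : ∀ r, ∀ x ∈ M, U r x ∈ M) :
    ℝ → M →L[ℂ] M :=
  fun r => (U r).restrict (hM r)

theorem IsUnitaryGroup.groupRestrict {U : ℝ → G →L[ℂ] G} (h : IsUnitaryGroup U)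
    {M : Submodule ℂ G} (hM : ∀ r, ∀ x ∈ M, U r x ∈ M) :
    IsUnitaryGroup (groupRestrict U M hM) :=
  ⟨ContinuousLinearMap.ext fun x => Subtype.ext (h.zero_apply x),
    fun s t => ContinuousLinearMap.ext fun x => Subtype.ext (h.add_apply s t x),
    fun t x => h.2.2.1 t x,
    fun t x => ⟨⟨U (-t) x, hM _ x x.2⟩, Subtype.ext (h.apply_apply_neg t x)⟩,
    fun x => Continuous.subtype_mk (h.2.2.2.2 x) _⟩

theorem IsUnitarySemigroupOn.exists_mem_apply_eq {H : Type} [NormedAddCommGroup H]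
    [InnerProductSpace ℂ H] {V : ℝ≥0 → H →L[ℂ] H} {L : Submodule ℂ H}
    (hL : IsUnitarySemigroupOn V L) {U : ℝ → G →L[ℂ] G} (hU : IsUnitaryGroup U) {j : H → G}
    (hj : ∀ (t : ℝ≥0) x, U t (j x) = j (V t x)) (r : ℝ) {x : H} (hx : x ∈ L) :
    ∃ y ∈ L, U r (j x) = j y := by
  rcases le_total 0 r with hr | hr
  · exact ⟨_, (hL ⟨r, hr⟩).1 x hx, hj ⟨r, hr⟩ x⟩
  · obtain ⟨y, hy, rfl⟩ := (hL (NNReal.mk (-r) (neg_nonneg.2 hr))).2.2 x hx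
    refine ⟨y, hy, ?_⟩
    rw [← hj, NNReal.coe_mk, hU.apply_apply_neg]

/-- The unitary group `U` on the ambient space extends the semigroup `V` on the subspace `K`. -/
structure IsUnitaryExtension (K : Submodule ℂ G) (V : ℝ≥0 → K →L[ℂ] K) (U : ℝ → G →L[ℂ] G) :
    Prop where
  isUnitaryGroup : IsUnitaryGroup U
  apply_coe : ∀ (t : ℝ≥0) (k : K), U t (k : G) = V t k

namespace IsUnitaryExtension

variable {K : Submodule ℂ G} {V : ℝ≥0 → K →L[ℂ] K} {U : ℝ → G →L[ℂ] G}

theorem apply_mem (h : IsUnitaryExtension K V U) (t : ℝ≥0) {k : G} (hk : k ∈ K) : U t k ∈ K := by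
  rw [h.apply_coe t ⟨k, hk⟩]
  exact (V t _).2

theorem isIsometrySemigroup (h : IsUnitaryExtension K V U) : IsIsometrySemigroup V := by
  refine ⟨⟨?_, fun s t => ?_, fun x => ?_⟩, fun t x => ?_⟩
  · ext x
    rw [← h.apply_coe, NNReal.coe_zero, h.isUnitaryGroup.zero_apply, one_apply_eq_self]
  · ext x
    rw [comp_apply, ← h.apply_coe, ← h.apply_coe, ← h.apply_coe, NNReal.coe_add,
      h.isUnitaryGroup.add_apply]
  · simp only [continuous_induced_rng, Function.comp_def, ← h.apply_coe]
    exact (h.isUnitaryGroup.2.2.2.2 _).comp NNReal.continuous_coe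
  · rw [Submodule.coe_norm, Submodule.coe_norm, ← h.apply_coe, h.isUnitaryGroup.2.2.1]

end IsUnitaryExtension

variable [CompleteSpace G]

/-- The dual `Ṽ_t = (U_t)*|_{Kᗮ}` of a semigroup on `K` with unitary extension `U`. The projection
onto `Kᗮ` makes the definition total; it acts trivially when `K` is invariant under `U_t`. -/
def dualSemigroup (K : Submodule ℂ G) (U : ℝ → G →L[ℂ] G) : ℝ≥0 → Kᗮ →L[ℂ] Kᗮ :=
  fun t => Kᗮ.orthogonalProjectionOnto ∘L U (-t) ∘L Kᗮ.subtypeL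

namespace IsUnitaryExtension

variable {K : Submodule ℂ G} {V : ℝ≥0 → K →L[ℂ] K} {U : ℝ → G →L[ℂ] G}

theorem apply_neg_mem_orthogonal (h : IsUnitaryExtension K V U) (t : ℝ≥0) {x : G}
    (hx : x ∈ Kᗮ) : U (-t) x ∈ Kᗮ := fun k hk => by
  rw [← h.isUnitaryGroup.inner_apply_left]
  exact hx _ (h.apply_mem t hk)

protected theorem dual (h : IsUnitaryExtension K V U) :
    IsUnitaryExtension Kᗮ (dualSemigroup K U) fun t => U (-t) :=
  ⟨h.isUnitaryGroup.neg, fun t x =>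
    (Submodule.starProjection_eq_self_iff.2 (h.apply_neg_mem_orthogonal t x.2)).symm⟩

variable [CompleteSpace K]

theorem adjoint_apply (h : IsUnitaryExtension K V U) (t : ℝ≥0) (k : K) :
    adjoint (V t) k = K.orthogonalProjectionOnto (U (-t) k) := by
  refine ext_inner_right ℂ fun l => ?_
  rw [adjoint_inner_left, Submodule.inner_orthogonalProjectionOnto_eq_of_mem_right,
    h.isUnitaryGroup.inner_apply_left, neg_neg, h.apply_coe, Submodule.coe_inner]

theorem orthogonalProjectionOnto_apply_neg (h : IsUnitaryExtension K V U) (t : ℝ≥0) (x : G) :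
    K.orthogonalProjectionOnto (U (-t) x) = adjoint (V t) (K.orthogonalProjectionOnto x) := by
  rw [h.adjoint_apply, ← sub_eq_zero, ← map_sub, ← map_sub]
  exact Submodule.orthogonalProjectionOnto_eq_zero_iff.2
    (h.apply_neg_mem_orthogonal t (K.sub_starProjection_mem_orthogonal x))

theorem mem_unitaryPart (h : IsUnitaryExtension K V U) {k : K} (hk : ∀ r, U r k ∈ K) :
    k ∈ unitaryPart V := fun t => Subtype.ext <| by
  rw [h.adjoint_apply, ← h.apply_coe,
    K.orthogonalProjectionOnto_mem_subspace_eq_self ⟨U (-t) k, hk (-t)⟩]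
  exact h.isUnitaryGroup.apply_apply_neg t k

theorem reducedBy_comap (h : IsUnitaryExtension K V U) {M : Submodule ℂ G}
    (hM : ∀ r, ∀ x ∈ M, U r x ∈ M) (hK : ∀ x ∈ M, K.starProjection x ∈ M) :
    ReducedBy V (M.comap K.subtype) := by
  refine ⟨fun t k hk => ?_, fun t k hk => ?_⟩
  · rw [Submodule.mem_comap, Submodule.subtype_apply, ← h.apply_coe]
    exact hM t k hk
  · rw [h.adjoint_apply]
    exact hK _ (hM (-t) k hk)

theorem orthogonalProjectionOnto_apply_mem (h : IsUnitaryExtension K V U) {S : Submodule ℂ K}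
    (hS : ReducedBy V S) (r : ℝ) {x : K} (hx : x ∈ S) :
    K.orthogonalProjectionOnto (U r x) ∈ S := by
  rcases le_total 0 r with hr | hr
  · rw [← NNReal.coe_mk r hr, h.apply_coe, K.orthogonalProjectionOnto_mem_subspace_eq_self]
    exact hS.1 _ x hx
  · rw [← neg_neg r, ← NNReal.coe_mk (-r) (neg_nonneg.2 hr), ← h.adjoint_apply]
    exact hS.2 _ x hx

end IsUnitaryExtension

end UnitaryExtension

section Restriction

variable {G : Type} [NormedAddCommGroup G] [InnerProductSpace ℂ G]

theorem IsIsometrySemigroup.sgRestrict {V : ℝ≥0 → G →L[ℂ] G} (h : IsIsometrySemigroup V)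
    {L : Submodule ℂ G} (hL : ∀ t, ∀ x ∈ L, V t x ∈ L) :
    IsIsometrySemigroup (SGRestrict V L hL) :=
  ⟨⟨ContinuousLinearMap.ext fun x => Subtype.ext (h.1.zero_apply x),
      fun s t => ContinuousLinearMap.ext fun x => Subtype.ext (h.1.add_apply s t x),
      fun x => Continuous.subtype_mk (h.1.2.2 x) _⟩,
    fun t x => h.2 t x⟩

variable [CompleteSpace G] {V : ℝ≥0 → G →L[ℂ] G} {L M : Submodule ℂ G}

theorem IsIsometrySemigroup.isUnitarySemigroupOn (h : IsIsometrySemigroup V)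
    (hL : ReducedBy V L) (hu : L ≤ unitaryPart V) : IsUnitarySemigroupOn V L :=
  fun t => ⟨hL.1 t, fun x _ => h.2 t x, fun y hy => ⟨_, hL.2 t y hy, hu hy t⟩⟩

theorem ReducedBy.inf (hL : ReducedBy V L) (hM : ReducedBy V M) : ReducedBy V (L ⊓ M) :=
  ⟨fun t x hx => ⟨hL.1 t x hx.1, hM.1 t x hx.2⟩, fun t x hx => ⟨hL.2 t x hx.1, hM.2 t x hx.2⟩⟩

end Restriction

section ReducesPair

variable {G : Type} [NormedAddCommGroup G] [InnerProductSpace ℂ G] [CompleteSpace G]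

/-- The closed subspace `L` reduces both semigroups `W₁` and `W₂`. -/
structure ReducesPair (W₁ W₂ : ℝ≥0 → G →L[ℂ] G) (L : Submodule ℂ G) : Prop where
  isClosed : IsClosed (L : Set G)
  left : ReducedBy W₁ L
  right : ReducedBy W₂ L

variable {W₁ W₂ : ℝ≥0 → G →L[ℂ] G}

protected theorem ReducesPair.symm {L : Submodule ℂ G} (h : ReducesPair W₁ W₂ L) :
    ReducesPair W₂ W₁ L :=
  ⟨h.isClosed, h.right, h.left⟩

theorem ReducesPair.orthogonal_sup_sup {A B C : Submodule ℂ G} (hA : ReducesPair W₁ W₂ A)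
    (hB : ReducesPair W₁ W₂ B) (hC : ReducesPair W₁ W₂ C) : ReducesPair W₁ W₂ (A ⊔ B ⊔ C)ᗮ :=
  ⟨Submodule.isClosed_orthogonal _, ((hA.left.sup hB.left).sup hC.left).orthogonal,
    ((hA.right.sup hB.right).sup hC.right).orthogonal⟩

namespace SgDoublyCommute

theorem reducesPair_bishiftPart (h₁ : IsIsometrySemigroup W₁) (h₂ : IsIsometrySemigroup W₂)
    (h : SgDoublyCommute W₁ W₂) : ReducesPair W₁ W₂ (bishiftPart W₁ W₂) :=
  ⟨isClosed_bishiftPart, h.reducedBy_bishiftPart_left h₁, h.reducedBy_bishiftPart_right h₂⟩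

theorem reducesPair_unitaryPart_right (h₂ : IsIsometrySemigroup W₂) (h : SgDoublyCommute W₁ W₂) :
    ReducesPair W₁ W₂ (unitaryPart W₂) :=
  ⟨isClosed_unitaryPart W₂, h.reducedBy_unitaryPart, h₂.reducedBy_unitaryPart⟩

theorem reducesPair_unitaryPart_left (h₁ : IsIsometrySemigroup W₁) (h : SgDoublyCommute W₁ W₂) :
    ReducesPair W₁ W₂ (unitaryPart W₁) :=
  (h.symm.reducesPair_unitaryPart_right h₁).symm

end SgDoublyCommute

end ReducesPair

section UnitaryHull

variable {G : Type} [NormedAddCommGroup G] [InnerProductSpace ℂ G]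
  {U₁ U₂ : ℝ → G →L[ℂ] G} {M : Submodule ℂ G} {S : Submodule ℂ M}

/-- The closed linear span of the orbit of a subspace `S` of `M` under the commuting groups `U₁`
and `U₂`, as a subspace of the ambient space. -/
def unitaryHull (U₁ U₂ : ℝ → G →L[ℂ] G) (S : Submodule ℂ M) : Submodule ℂ G :=
  (Submodule.span ℂ {z | ∃ t s : ℝ, ∃ x ∈ S, U₁ t (U₂ s (x : G)) = z}).topologicalClosure

theorem isClosed_unitaryHull : IsClosed (unitaryHull U₁ U₂ S : Set G) :=
  Submodule.isClosed_topologicalClosure _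

theorem apply_apply_mem_unitaryHull (t s : ℝ) {x : M} (hx : x ∈ S) :
    U₁ t (U₂ s x) ∈ unitaryHull U₁ U₂ S :=
  Submodule.le_topologicalClosure _ (Submodule.subset_span ⟨t, s, x, hx, rfl⟩)

theorem coe_mem_unitaryHull (h₁ : IsUnitaryGroup U₁) (h₂ : IsUnitaryGroup U₂) {x : M}
    (hx : x ∈ S) : (x : G) ∈ unitaryHull U₁ U₂ S := by
  simpa only [h₁.zero_apply, h₂.zero_apply] using
    apply_apply_mem_unitaryHull (U₁ := U₁) (U₂ := U₂) 0 0 hx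

theorem unitaryHull_comm (hc : ∀ s t x, U₁ s (U₂ t x) = U₂ t (U₁ s x)) :
    unitaryHull U₁ U₂ S = unitaryHull U₂ U₁ S := by
  refine congrArg (fun s => (Submodule.span ℂ s).topologicalClosure) (Set.ext fun z => ?_)
  simp only [Set.mem_ofPred_eq, hc]
  exact exists_comm

theorem apply_mem_unitaryHull (h₁ : IsUnitaryGroup U₁) (r : ℝ) {x : G}
    (hx : x ∈ unitaryHull U₁ U₂ S) : U₁ r x ∈ unitaryHull U₁ U₂ S := by
  refine map_mem_of_mem_topologicalClosure_span (U₁ r) isClosed_unitaryHull ?_ hx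
  rintro _ ⟨t, s, x, hx, rfl⟩
  rw [← h₁.add_apply]
  exact apply_apply_mem_unitaryHull _ _ hx

end UnitaryHull

section UnitaryExtensionPair

variable {G : Type} [NormedAddCommGroup G] [InnerProductSpace ℂ G]

/-- The commuting unitary groups `U₁` and `U₂` extend the semigroups `V₁` and `V₂` on the subspace
`K`; the extension need not be minimal. -/
structure IsUnitaryExtensionPair (K : Submodule ℂ G) (V₁ V₂ : ℝ≥0 → K →L[ℂ] K)
    (U₁ U₂ : ℝ → G →L[ℂ] G) : Prop where
  left : IsUnitaryExtension K V₁ U₁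
  right : IsUnitaryExtension K V₂ U₂
  apply_comm : ∀ s t x, U₁ s (U₂ t x) = U₂ t (U₁ s x)

/-- The part of `K` induced by a subspace `S` of `Kᗮ`: the intersection of `K` with the smallest
closed subspace containing `S` and reducing `U₁` and `U₂`. -/
def inducedPart {K : Submodule ℂ G} (U₁ U₂ : ℝ → G →L[ℂ] G) (S : Submodule ℂ Kᗮ) :
    Submodule ℂ K :=
  (unitaryHull U₁ U₂ S).comap K.subtype

variable {K : Submodule ℂ G} {V₁ V₂ : ℝ≥0 → K →L[ℂ] K} {U₁ U₂ : ℝ → G →L[ℂ] G}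
  {S T : Submodule ℂ Kᗮ}

theorem isClosed_inducedPart : IsClosed (inducedPart U₁ U₂ S : Set K) :=
  isClosed_unitaryHull.preimage continuous_subtype_val

namespace IsUnitaryExtensionPair

protected theorem symm (h : IsUnitaryExtensionPair K V₁ V₂ U₁ U₂) :
    IsUnitaryExtensionPair K V₂ V₁ U₂ U₁ :=
  ⟨h.right, h.left, fun s t x => (h.apply_comm t s x).symm⟩

theorem inducedPart_comm (h : IsUnitaryExtensionPair K V₁ V₂ U₁ U₂) :
    inducedPart U₁ U₂ S = inducedPart U₂ U₁ S :=
  congrArg (Submodule.comap K.subtype) (unitaryHull_comm h.apply_comm)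

theorem apply_right_mem_unitaryHull (h : IsUnitaryExtensionPair K V₁ V₂ U₁ U₂) (r : ℝ) {x : G}
    (hx : x ∈ unitaryHull U₁ U₂ S) : U₂ r x ∈ unitaryHull U₁ U₂ S := by
  rw [unitaryHull_comm h.apply_comm] at hx ⊢
  exact apply_mem_unitaryHull h.right.isUnitaryGroup r hx

variable [CompleteSpace G]

protected theorem dual (h : IsUnitaryExtensionPair K V₁ V₂ U₁ U₂) :
    IsUnitaryExtensionPair Kᗮ (dualSemigroup K U₁) (dualSemigroup K U₂) (fun t => U₁ (-t))
      fun t => U₂ (-t) :=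
  ⟨h.left.dual, h.right.dual, fun s t => h.apply_comm (-s) (-t)⟩

theorem inner_apply_apply_left (h : IsUnitaryExtensionPair K V₁ V₂ U₁ U₂) (t s : ℝ) (x y : G) :
    ⟪U₁ t (U₂ s x), y⟫_ℂ = ⟪x, U₁ (-t) (U₂ (-s) y)⟫_ℂ := by
  rw [h.left.isUnitaryGroup.inner_apply_left, h.right.isUnitaryGroup.inner_apply_left,
    h.apply_comm]

theorem orthogonalProjectionOnto_apply_apply_mem [CompleteSpace K]
    (h : IsUnitaryExtensionPair K V₁ V₂ U₁ U₂) {L : Submodule ℂ K} (hL : ReducesPair V₁ V₂ L)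
    (t s : ℝ) {x : K} (hx : x ∈ L) : K.orthogonalProjectionOnto (U₁ t (U₂ s x)) ∈ L := by
  rcases le_total 0 s with hs | hs
  · rw [← NNReal.coe_mk s hs, h.right.apply_coe]
    exact h.left.orthogonalProjectionOnto_apply_mem hL.left t (hL.right.1 _ x hx)
  · rw [h.apply_comm, ← neg_neg s, ← NNReal.coe_mk (-s) (neg_nonneg.2 hs),
      h.right.orthogonalProjectionOnto_apply_neg]
    exact hL.right.2 _ _ (h.left.orthogonalProjectionOnto_apply_mem hL.left t hx)

theorem orthogonalProjectionOnto_mem_of_mem_unitaryHull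
    (h : IsUnitaryExtensionPair K V₁ V₂ U₁ U₂)
    (hS : ReducesPair (dualSemigroup K U₁) (dualSemigroup K U₂) S) {g : G}
    (hg : g ∈ unitaryHull U₁ U₂ S) : Kᗮ.orthogonalProjectionOnto g ∈ S := by
  refine map_mem_of_mem_topologicalClosure_span _ hS.isClosed ?_ hg
  rintro _ ⟨t, s, x, hx, rfl⟩
  simpa only [neg_neg] using h.dual.orthogonalProjectionOnto_apply_apply_mem hS (-t) (-s) hx

theorem orthoSubspaces_unitaryHull (h : IsUnitaryExtensionPair K V₁ V₂ U₁ U₂)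
    (hT : ReducesPair (dualSemigroup K U₁) (dualSemigroup K U₂) T) (hST : OrthoSubspaces S T) :
    OrthoSubspaces (unitaryHull U₁ U₂ S) (unitaryHull U₁ U₂ T) := fun x hx y hy => by
  refine inner_eq_zero_of_mem_topologicalClosure_span ?_ hx
  rintro _ ⟨t, s, x, hx, rfl⟩
  rw [h.inner_apply_apply_left, ← Submodule.inner_orthogonalProjectionOnto_eq_of_mem_left]
  exact hST x hx _ (h.orthogonalProjectionOnto_mem_of_mem_unitaryHull hT
    (apply_mem_unitaryHull h.left.isUnitaryGroup _ (h.apply_right_mem_unitaryHull _ hy)))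

theorem orthoSubspaces_inducedPart (h : IsUnitaryExtensionPair K V₁ V₂ U₁ U₂)
    (hT : ReducesPair (dualSemigroup K U₁) (dualSemigroup K U₂) T) (hST : OrthoSubspaces S T) :
    OrthoSubspaces (inducedPart U₁ U₂ S : Submodule ℂ K) (inducedPart U₁ U₂ T) :=
  fun x hx y hy => h.orthoSubspaces_unitaryHull hT hST x hx y hy

variable [CompleteSpace K]

theorem orthogonalProjectionOnto_mem_inducedPart (h : IsUnitaryExtensionPair K V₁ V₂ U₁ U₂)
    (hS : ReducesPair (dualSemigroup K U₁) (dualSemigroup K U₂) S) {g : G}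
    (hg : g ∈ unitaryHull U₁ U₂ S) : K.orthogonalProjectionOnto g ∈ inducedPart U₁ U₂ S := by
  have hproj : Kᗮ.starProjection g ∈ unitaryHull U₁ U₂ S :=
    coe_mem_unitaryHull h.left.isUnitaryGroup h.right.isUnitaryGroup
      (h.orthogonalProjectionOnto_mem_of_mem_unitaryHull hS hg)
  change K.starProjection g ∈ unitaryHull U₁ U₂ S
  rw [eq_sub_of_add_eq (K.starProjection_add_starProjection_orthogonal g)]
  exact sub_mem hg hproj

theorem reducedBy_inducedPart_left (h : IsUnitaryExtensionPair K V₁ V₂ U₁ U₂)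
    (hS : ReducesPair (dualSemigroup K U₁) (dualSemigroup K U₂) S) :
    ReducedBy V₁ (inducedPart U₁ U₂ S) :=
  h.left.reducedBy_comap (fun r _ hx => apply_mem_unitaryHull h.left.isUnitaryGroup r hx)
    fun _ hx => h.orthogonalProjectionOnto_mem_inducedPart hS hx

theorem reducesPair_inducedPart (h : IsUnitaryExtensionPair K V₁ V₂ U₁ U₂)
    (hS : ReducesPair (dualSemigroup K U₁) (dualSemigroup K U₂) S) :
    ReducesPair V₁ V₂ (inducedPart U₁ U₂ S) := by
  refine ⟨isClosed_inducedPart, h.reducedBy_inducedPart_left hS, ?_⟩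
  rw [h.inducedPart_comm]
  exact h.symm.reducedBy_inducedPart_left hS.symm

theorem inner_eq_zero_of_mem_unitaryHull (h : IsUnitaryExtensionPair K V₁ V₂ U₁ U₂)
    (hS : ReducesPair (dualSemigroup K U₁) (dualSemigroup K U₂) S) {g : G}
    (hg : g ∈ unitaryHull U₁ U₂ S) {k : K} (hk : k ∈ (inducedPart U₁ U₂ S)ᗮ) :
    ⟪g, (k : G)⟫_ℂ = 0 := by
  rw [← Submodule.inner_orthogonalProjectionOnto_eq_of_mem_right]
  exact hk _ (h.orthogonalProjectionOnto_mem_inducedPart hS hg)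

theorem exists_mem_coe_eq_of_inner_inducedPart (h : IsUnitaryExtensionPair K V₁ V₂ U₁ U₂)
    (hS : ReducesPair (dualSemigroup K U₁) (dualSemigroup K U₂) S) {g : G}
    (hg : g ∈ unitaryHull U₁ U₂ S)
    (hperp : ∀ k ∈ inducedPart U₁ U₂ S, ⟪(k : G), g⟫_ℂ = 0) : ∃ x ∈ S, (x : G) = g := by
  have hzero : K.orthogonalProjectionOnto g = 0 := by
    rw [← inner_self_eq_zero (𝕜 := ℂ), Submodule.inner_orthogonalProjectionOnto_eq_of_mem_left]
    exact hperp _ (h.orthogonalProjectionOnto_mem_inducedPart hS hg)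
  refine ⟨_, h.orthogonalProjectionOnto_mem_of_mem_unitaryHull hS hg, ?_⟩
  exact Submodule.starProjection_eq_self_iff.2
    (Submodule.orthogonalProjectionOnto_eq_zero_iff.1 hzero)

end IsUnitaryExtensionPair

end UnitaryExtensionPair

section UnitaryAndCnuParts

variable {G : Type} [NormedAddCommGroup G] [InnerProductSpace ℂ G] [CompleteSpace G]
  {K : Submodule ℂ G} {V₁ V₂ : ℝ≥0 → K →L[ℂ] K} {U₁ U₂ : ℝ → G →L[ℂ] G}
  {S : Submodule ℂ Kᗮ}

namespace IsUnitaryExtensionPair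

theorem inner_apply_apply_of_isUnitarySemigroupOn (h : IsUnitaryExtensionPair K V₁ V₂ U₁ U₂)
    {L : Submodule ℂ K} (hL₁ : IsUnitarySemigroupOn V₁ L) (hL₂ : IsUnitarySemigroupOn V₂ L)
    (t s : ℝ) {x : G} (hx : x ∈ Kᗮ) {l : K} (hl : l ∈ L) : ⟪U₁ t (U₂ s x), (l : G)⟫_ℂ = 0 := by
  obtain ⟨l₂, hl₂, hU₂⟩ :=
    hL₂.exists_mem_apply_eq h.right.isUnitaryGroup h.right.apply_coe (-s) hl
  obtain ⟨l₁, -, hU₁⟩ :=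
    hL₁.exists_mem_apply_eq h.left.isUnitaryGroup h.left.apply_coe (-t) hl₂
  rw [h.inner_apply_apply_left, hU₂, hU₁]
  exact Submodule.inner_left_of_mem_orthogonal l₁.2 hx

theorem orthoSubspaces_inducedPart_bishiftPart_unitaryPart_left
    (h : IsUnitaryExtensionPair K V₁ V₂ U₁ U₂)
    (hd : SgDoublyCommute (dualSemigroup K U₁) (dualSemigroup K U₂)) :
    OrthoSubspaces
      (inducedPart U₁ U₂ (bishiftPart (dualSemigroup K U₁) (dualSemigroup K U₂)) : Submodule ℂ K)
      (inducedPart U₁ U₂ (unitaryPart (dualSemigroup K U₁))) := by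
  have hiso := h.dual.left.isIsometrySemigroup
  exact h.orthoSubspaces_inducedPart (hd.reducesPair_unitaryPart_left hiso)
    fun _ hx _ hy => hd.inner_bishiftPart_unitaryPart_left hiso hx hy

theorem orthoSubspaces_inducedPart_bishiftPart_unitaryPart_right
    (h : IsUnitaryExtensionPair K V₁ V₂ U₁ U₂)
    (hd : SgDoublyCommute (dualSemigroup K U₁) (dualSemigroup K U₂)) :
    OrthoSubspaces
      (inducedPart U₁ U₂ (bishiftPart (dualSemigroup K U₁) (dualSemigroup K U₂)) : Submodule ℂ K)
      (inducedPart U₁ U₂ (unitaryPart (dualSemigroup K U₂))) := by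
  have hiso := h.dual.right.isIsometrySemigroup
  exact h.orthoSubspaces_inducedPart (hd.reducesPair_unitaryPart_right hiso)
    fun _ hx _ hy => hd.inner_bishiftPart_unitaryPart_right hiso hx hy

variable [CompleteSpace K]

theorem isCnuOn_inducedPart (h : IsUnitaryExtensionPair K V₁ V₂ U₁ U₂)
    (hS : IsUnitarySemigroupOn (dualSemigroup K U₁) S) :
    IsCnuOn V₂ (inducedPart U₁ U₂ S) := by
  refine fun L _ hle _ hL => (Submodule.eq_bot_iff L).2 fun l hl => Subtype.ext ?_
  refine inner_self_eq_zero.1 (inner_eq_zero_of_mem_topologicalClosure_span ?_ (hle hl))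
  rintro _ ⟨t, s, x, hx, rfl⟩
  obtain ⟨y, -, hy⟩ :=
    hS.exists_mem_apply_eq h.dual.left.isUnitaryGroup h.dual.left.apply_coe (-t) hx
  obtain ⟨l', -, hl'⟩ :=
    hL.exists_mem_apply_eq h.right.isUnitaryGroup h.right.apply_coe (-s) hl
  rw [neg_neg] at hy
  rw [h.apply_comm, h.right.isUnitaryGroup.inner_apply_left, hy, hl']
  exact Submodule.inner_left_of_mem_orthogonal l'.2 y.2

theorem isUnitarySemigroupOn_inducedPart (h : IsUnitaryExtensionPair K V₁ V₂ U₁ U₂)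
    (hS : ReducesPair (dualSemigroup K U₁) (dualSemigroup K U₂) S)
    (hS₁ : IsUnitarySemigroupOn (dualSemigroup K U₁) S) :
    IsUnitarySemigroupOn V₁ (inducedPart U₁ U₂ S) := by
  refine h.left.isIsometrySemigroup.isUnitarySemigroupOn (h.reducedBy_inducedPart_left hS)
    fun k hk => h.left.mem_unitaryPart fun r => ?_
  have hp : Kᗮ.orthogonalProjectionOnto (U₁ r k) ∈ S :=
    h.orthogonalProjectionOnto_mem_of_mem_unitaryHull hS
      (apply_mem_unitaryHull h.left.isUnitaryGroup r hk)
  obtain ⟨y, -, hy⟩ :=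
    hS₁.exists_mem_apply_eq h.dual.left.isUnitaryGroup h.dual.left.apply_coe r hp
  have hzero : Kᗮ.orthogonalProjectionOnto (U₁ r k) = 0 := by
    rw [← inner_self_eq_zero (𝕜 := ℂ), Submodule.inner_orthogonalProjectionOnto_eq_of_mem_right,
      h.left.isUnitaryGroup.inner_apply_left, hy]
    exact Submodule.inner_right_of_mem_orthogonal k.2 y.2
  rwa [Submodule.orthogonalProjectionOnto_eq_zero_iff, K.orthogonal_orthogonal] at hzero

end IsUnitaryExtensionPair

namespace IsMinimalUnitaryExtension

theorem isUnitaryExtensionPair (h : IsMinimalUnitaryExtension K V₁ V₂ U₁ U₂) :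
    IsUnitaryExtensionPair K V₁ V₂ U₁ U₂ :=
  ⟨⟨h.1, fun t k => (h.2.2.2.1 t k).1⟩, ⟨h.2.1, fun t k => (h.2.2.2.1 t k).2⟩,
    fun s t x => congr($(h.2.2.1 s t) x)⟩

theorem disjoint_unitaryPart_dualSemigroup (h : IsMinimalUnitaryExtension K V₁ V₂ U₁ U₂)
    (hd : SgDoublyCommute (dualSemigroup K U₁) (dualSemigroup K U₂)) :
    Disjoint (unitaryPart (dualSemigroup K U₁)) (unitaryPart (dualSemigroup K U₂)) := by
  have hdual := h.isUnitaryExtensionPair.dual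
  have hiso₁ := hdual.left.isIsometrySemigroup
  have hiso₂ := hdual.right.isIsometrySemigroup
  have hL₁ := hiso₁.isUnitarySemigroupOn
    (hiso₁.reducedBy_unitaryPart.inf hd.reducedBy_unitaryPart) inf_le_left
  have hL₂ := hiso₂.isUnitarySemigroupOn
    (hd.symm.reducedBy_unitaryPart.inf hiso₂.reducedBy_unitaryPart) inf_le_right
  refine disjoint_iff.2 ((Submodule.eq_bot_iff _).2 fun x hx => Subtype.ext ?_)
  refine inner_self_eq_zero.1
    (inner_eq_zero_of_mem_topologicalClosure_span ?_ (h.2.2.2.2 ▸ Submodule.mem_top))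
  rintro _ ⟨t, s, k, rfl⟩
  simpa only [neg_neg] using hdual.inner_apply_apply_of_isUnitarySemigroupOn hL₁ hL₂ (-t) (-s)
    (K.le_orthogonal_orthogonal k.2) hx

theorem orthoSubspaces_inducedPart_unitaryPart
    (h : IsMinimalUnitaryExtension K V₁ V₂ U₁ U₂)
    (hd : SgDoublyCommute (dualSemigroup K U₁) (dualSemigroup K U₂)) :
    OrthoSubspaces (inducedPart U₁ U₂ (unitaryPart (dualSemigroup K U₂)) : Submodule ℂ K)
      (inducedPart U₁ U₂ (unitaryPart (dualSemigroup K U₁))) := by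
  have hpair := h.isUnitaryExtensionPair
  exact hpair.orthoSubspaces_inducedPart
    (hd.reducesPair_unitaryPart_left hpair.dual.left.isIsometrySemigroup)
    fun x hx y hy => hd.symm.inner_unitaryPart_unitaryPart
      (h.disjoint_unitaryPart_dualSemigroup hd).symm hx hy

end IsMinimalUnitaryExtension

theorem DualDoublyCommutes.sgDoublyCommute [CompleteSpace K]
    (hd : DualDoublyCommutes K U₁ U₂) (h : IsUnitaryExtensionPair K V₁ V₂ U₁ U₂) :
    SgDoublyCommute (dualSemigroup K U₁) (dualSemigroup K U₂) := by
  have hmem (g : G) : g - Kᗮ.orthogonalProjectionOnto g ∈ K :=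
    K.orthogonal_orthogonal.le <| Kᗮ.sub_starProjection_mem_orthogonal g
  refine ⟨fun t s => ?_, fun t s => ?_⟩ <;> ext x <;>
    rw [comp_apply, comp_apply, ← h.dual.left.apply_coe]
  · rw [← h.dual.right.apply_coe, ← h.dual.right.apply_coe, ← h.dual.left.apply_coe,
      h.apply_comm]
  · rw [h.dual.right.adjoint_apply, h.dual.right.adjoint_apply, neg_neg,
      ← h.dual.left.apply_coe, ← h.left.isUnitaryGroup.adjoint_eq]
    refine (hd t s t.2 s.2 x x.2).2 _ _ (Subtype.prop _) (hmem _) (Subtype.prop _) ?_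
    exact hmem _

end UnitaryAndCnuParts

section OrthogonalSum

variable {𝕜 E : Type*} [RCLike 𝕜] [NormedAddCommGroup E] [InnerProductSpace 𝕜 E]
  {A B C : Submodule 𝕜 E}

theorem hasOrthogonalProjection_sup [A.HasOrthogonalProjection] [B.HasOrthogonalProjection]
    (hAB : A ⟂ B) : (A ⊔ B).HasOrthogonalProjection where
  exists_orthogonal v := by
    refine ⟨A.starProjection v + B.starProjection v, Submodule.add_mem_sup
      (A.starProjection_apply_mem v) (B.starProjection_apply_mem v), ?_⟩
    rw [← Submodule.inf_orthogonal, Submodule.mem_inf]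
    constructor
    · rw [← sub_sub]
      exact sub_mem (A.sub_starProjection_mem_orthogonal v)
        (hAB.symm (B.starProjection_apply_mem v))
    · rw [← sub_sub, sub_right_comm]
      exact sub_mem (B.sub_starProjection_mem_orthogonal v) (hAB (A.starProjection_apply_mem v))

theorem sup_sup_sup_orthogonal_eq_top [A.HasOrthogonalProjection] [B.HasOrthogonalProjection]
    [C.HasOrthogonalProjection] (hAB : A ⟂ B) (hAC : A ⟂ C) (hBC : B ⟂ C) :
    A ⊔ B ⊔ C ⊔ (A ⊔ B ⊔ C)ᗮ = ⊤ := by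
  have := hasOrthogonalProjection_sup hAB
  have := hasOrthogonalProjection_sup (Submodule.isOrtho_sup_left.2 ⟨hAC, hBC⟩)
  exact Submodule.sup_orthogonal_of_hasOrthogonalProjection

end OrthogonalSum

theorem orthoSubspaces_orthogonal_of_le {G : Type} [NormedAddCommGroup G] [InnerProductSpace ℂ G]
    {A B : Submodule ℂ G} (h : A ≤ B) : OrthoSubspaces A Bᗮ :=
  fun _ hx _ hy => hy _ (h hx)

section ModifiedBishift

theorem IsUnitarySemigroupOn.map_subtype {G : Type} [NormedAddCommGroup G]
    [InnerProductSpace ℂ G] {V : ℝ≥0 → G →L[ℂ] G} {L : Submodule ℂ G}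
    {hL : ∀ t, ∀ x ∈ L, V t x ∈ L} {M : Submodule ℂ L}
    (h : IsUnitarySemigroupOn (SGRestrict V L hL) M) :
    IsUnitarySemigroupOn V (M.map L.subtype) := by
  refine fun t => ⟨?_, ?_, ?_⟩
  · rintro _ ⟨x, hx, rfl⟩
    exact ⟨_, (h t).1 x hx, rfl⟩
  · rintro _ ⟨x, hx, rfl⟩
    exact (h t).2.1 x hx
  · rintro _ ⟨y, hy, rfl⟩
    obtain ⟨x, hx, rfl⟩ := (h t).2.2 y hy
    exact ⟨x, ⟨x, hx, rfl⟩, rfl⟩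

variable {G : Type} [NormedAddCommGroup G] [InnerProductSpace ℂ G]
  {K : Submodule ℂ G} {V₁ V₂ : ℝ≥0 → K →L[ℂ] K} {U₁ U₂ : ℝ → G →L[ℂ] G}
  {S : Submodule ℂ Kᗮ}

/-- The inclusion of the induced part of `K` into the unitary hull it is cut out of. -/
def inducedInclusion (K : Submodule ℂ G) (U₁ U₂ : ℝ → G →L[ℂ] G) (S : Submodule ℂ Kᗮ) :
    (inducedPart U₁ U₂ S : Submodule ℂ K) →ₗᵢ[ℂ] unitaryHull U₁ U₂ S where
  toLinearMap := (K.subtype.domRestrict _).codRestrict _ fun x => x.2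
  norm_map' _ := rfl

instance [CompleteSpace K] : CompleteSpace (inducedPart U₁ U₂ S : Submodule ℂ K) :=
  isClosed_inducedPart.completeSpace_coe

theorem IsUnitaryExtensionPair.sgCommute (h : IsUnitaryExtensionPair K V₁ V₂ U₁ U₂) :
    SgCommute V₁ V₂ := fun t s => by
  ext k
  rw [comp_apply, comp_apply, ← h.left.apply_coe, ← h.right.apply_coe, ← h.right.apply_coe,
    ← h.left.apply_coe, h.apply_comm]

variable [CompleteSpace G]

instance : CompleteSpace (unitaryHull U₁ U₂ S) :=
  isClosed_unitaryHull.completeSpace_coe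

variable [CompleteSpace K]

theorem IsUnitaryExtensionPair.isCnuPair_inducedPart (h : IsUnitaryExtensionPair K V₁ V₂ U₁ U₂)
    (i₁ : ∀ t, ∀ x ∈ inducedPart U₁ U₂ S, V₁ t x ∈ inducedPart U₁ U₂ S)
    (i₂ : ∀ t, ∀ x ∈ inducedPart U₁ U₂ S, V₂ t x ∈ inducedPart U₁ U₂ S) :
    IsCnuPair (SGRestrict V₁ _ i₁) (SGRestrict V₂ _ i₂) := by
  refine fun L _ _ _ hL₁ hL₂ => (Submodule.eq_bot_iff L).2 fun l hl =>
    Subtype.ext (Subtype.ext ?_)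
  refine inner_self_eq_zero.1 (inner_eq_zero_of_mem_topologicalClosure_span ?_ l.2)
  rintro _ ⟨t, s, x, -, rfl⟩
  exact h.inner_apply_apply_of_isUnitarySemigroupOn hL₁.map_subtype hL₂.map_subtype t s x.2
    ⟨l, hl, rfl⟩

theorem IsMinimalUnitaryExtension.eq_zero_of_inner_inducedPart
    (h : IsMinimalUnitaryExtension K V₁ V₂ U₁ U₂)
    (hS : ReducesPair (dualSemigroup K U₁) (dualSemigroup K U₂) S) {z : G}
    (hz : z ∈ unitaryHull U₁ U₂ S)
    (hperp : ∀ t s, ∀ k ∈ inducedPart U₁ U₂ S, ⟪U₁ t (U₂ s (k : G)), z⟫_ℂ = 0) : z = 0 := by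
  have hpair := h.isUnitaryExtensionPair
  refine inner_self_eq_zero.1
    (inner_eq_zero_of_mem_topologicalClosure_span ?_ (h.2.2.2.2 ▸ Submodule.mem_top))
  rintro _ ⟨t, s, k, rfl⟩
  obtain ⟨x, -, hx⟩ := hpair.exists_mem_coe_eq_of_inner_inducedPart hS
    (apply_mem_unitaryHull hpair.left.isUnitaryGroup (-t)
      (hpair.apply_right_mem_unitaryHull (-s) hz))
    fun k hk => by rw [← hpair.inner_apply_apply_left]; exact hperp t s k hk
  rw [hpair.inner_apply_apply_left, ← hx]
  exact Submodule.inner_right_of_mem_orthogonal k.2 x.2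

theorem IsUnitaryExtensionPair.exists_equiv_orthogonal_range_inducedInclusion
    (h : IsUnitaryExtensionPair K V₁ V₂ U₁ U₂)
    (hS : ReducesPair (dualSemigroup K U₁) (dualSemigroup K U₂) S) :
    ∃ A : S ≃ₗᵢ[ℂ] (LinearMap.range (inducedInclusion K U₁ U₂ S).toLinearMap)ᗮ,
      ∀ x, ((A x : unitaryHull U₁ U₂ S) : G) = ((x : Kᗮ) : G) := by
  let A : S →ₗᵢ[ℂ] (LinearMap.range (inducedInclusion K U₁ U₂ S).toLinearMap)ᗮ :=
    { toLinearMap := (((Kᗮ).subtype.domRestrict S).codRestrict (unitaryHull U₁ U₂ S) fun x =>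
        coe_mem_unitaryHull h.left.isUnitaryGroup h.right.isUnitaryGroup x.2).codRestrict _ <| by
          rintro x _ ⟨k, rfl⟩
          exact x.1.2 k.1 k.1.2
      norm_map' := fun _ => rfl }
  refine ⟨LinearIsometryEquiv.ofSurjective A fun e => ?_, fun _ => rfl⟩
  obtain ⟨x, hx, hxe⟩ := h.exists_mem_coe_eq_of_inner_inducedPart hS e.1.2
    fun k hk => e.2 _ ⟨⟨k, hk⟩, rfl⟩
  exact ⟨⟨x, hx⟩, Subtype.ext (Subtype.ext hxe)⟩

theorem IsUnitaryExtensionPair.dualIsBishift_inducedInclusion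
    (h : IsUnitaryExtensionPair K V₁ V₂ U₁ U₂)
    (hd : SgDoublyCommute (dualSemigroup K U₁) (dualSemigroup K U₂))
    (hU₁ : ∀ r, ∀ x ∈ unitaryHull U₁ U₂ (bishiftPart (dualSemigroup K U₁) (dualSemigroup K U₂)),
      U₁ r x ∈ unitaryHull U₁ U₂ (bishiftPart (dualSemigroup K U₁) (dualSemigroup K U₂)))
    (hU₂ : ∀ r, ∀ x ∈ unitaryHull U₁ U₂ (bishiftPart (dualSemigroup K U₁) (dualSemigroup K U₂)),
      U₂ r x ∈ unitaryHull U₁ U₂ (bishiftPart (dualSemigroup K U₁) (dualSemigroup K U₂))) :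
    DualIsBishift (LinearMap.range (inducedInclusion K U₁ U₂
        (bishiftPart (dualSemigroup K U₁) (dualSemigroup K U₂))).toLinearMap)
      (groupRestrict U₁ _ hU₁) (groupRestrict U₂ _ hU₂) := by
  have hiso₁ := h.dual.left.isIsometrySemigroup
  have hiso₂ := h.dual.right.isIsometrySemigroup
  obtain ⟨A, hA⟩ := h.exists_equiv_orthogonal_range_inducedInclusion
    (hd.reducesPair_bishiftPart hiso₁ hiso₂)
  obtain ⟨Z, hZ⟩ := hd.exists_bishiftPart_equiv_quadrantShift hiso₁ hiso₂
  refine ⟨_, _, _, inferInstance, A.symm.trans Z, fun t ht f g =>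
    ⟨fun hg => Subtype.ext ?_, fun hg => Subtype.ext ?_⟩⟩
  · rw [(h.left.isUnitaryGroup.groupRestrict hU₁).adjoint_eq]
    change U₁ (-t) (A (Z.symm f)).1.1 = (A (Z.symm g)).1.1
    rw [hA, hA, ← hZ ⟨t, ht⟩ 0 f g (hg.trans (quadrantShift_left_ae_eq t f)),
      hiso₂.1.zero_apply]
    exact h.dual.left.apply_coe ⟨t, ht⟩ _
  · rw [(h.right.isUnitaryGroup.groupRestrict hU₂).adjoint_eq]
    change U₂ (-t) (A (Z.symm f)).1.1 = (A (Z.symm g)).1.1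
    rw [hA, hA, ← hZ 0 ⟨t, ht⟩ f g (hg.trans (quadrantShift_right_ae_eq t f)),
      hiso₁.1.zero_apply]
    exact h.dual.right.apply_coe ⟨t, ht⟩ _

theorem IsMinimalUnitaryExtension.isModifiedBishift_inducedPart
    (h : IsMinimalUnitaryExtension K V₁ V₂ U₁ U₂)
    (hd : SgDoublyCommute (dualSemigroup K U₁) (dualSemigroup K U₂))
    (i₁ : ∀ t, ∀ x ∈ inducedPart U₁ U₂ (bishiftPart (dualSemigroup K U₁) (dualSemigroup K U₂)),
      V₁ t x ∈ inducedPart U₁ U₂ (bishiftPart (dualSemigroup K U₁) (dualSemigroup K U₂)))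
    (i₂ : ∀ t, ∀ x ∈ inducedPart U₁ U₂ (bishiftPart (dualSemigroup K U₁) (dualSemigroup K U₂)),
      V₂ t x ∈ inducedPart U₁ U₂ (bishiftPart (dualSemigroup K U₁) (dualSemigroup K U₂))) :
    IsModifiedBishift (SGRestrict V₁ _ i₁) (SGRestrict V₂ _ i₂) := by
  have hp := h.isUnitaryExtensionPair
  set S := bishiftPart (dualSemigroup K U₁) (dualSemigroup K U₂)
  have hS : ReducesPair (dualSemigroup K U₁) (dualSemigroup K U₂) S :=
    hd.reducesPair_bishiftPart hp.dual.left.isIsometrySemigroup hp.dual.right.isIsometrySemigroup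
  have hU₁ (r : ℝ) (x : G) (hx : x ∈ unitaryHull U₁ U₂ S) : U₁ r x ∈ unitaryHull U₁ U₂ S :=
    apply_mem_unitaryHull hp.left.isUnitaryGroup r hx
  have hU₂ (r : ℝ) (x : G) (hx : x ∈ unitaryHull U₁ U₂ S) : U₂ r x ∈ unitaryHull U₁ U₂ S :=
    hp.apply_right_mem_unitaryHull r hx
  refine ⟨hp.left.isIsometrySemigroup.sgRestrict i₁, hp.right.isIsometrySemigroup.sgRestrict i₂,
    fun t s => ContinuousLinearMap.ext fun x => Subtype.ext congr($(hp.sgCommute t s) x),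
    hp.isCnuPair_inducedPart i₁ i₂, unitaryHull U₁ U₂ S, inferInstance, inferInstance,
    inferInstance, inducedInclusion K U₁ U₂ S, groupRestrict U₁ _ hU₁, groupRestrict U₂ _ hU₂,
    hp.left.isUnitaryGroup.groupRestrict hU₁, hp.right.isUnitaryGroup.groupRestrict hU₂,
    fun s t => ContinuousLinearMap.ext fun x => Subtype.ext (hp.apply_comm s t x),
    fun t x => ⟨Subtype.ext (hp.left.apply_coe t x), Subtype.ext (hp.right.apply_coe t x)⟩, ?_,
    hp.dualIsBishift_inducedInclusion hd hU₁ hU₂⟩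
  refine (Submodule.topologicalClosure_eq_top_iff).2 ((Submodule.eq_bot_iff _).2 fun z hz => ?_)
  exact Subtype.ext (h.eq_zero_of_inner_inducedPart hS z.2 fun t s k hk =>
    hz _ (Submodule.subset_span ⟨t, s, ⟨k, hk⟩, rfl⟩))

end ModifiedBishift

section Decomposition

variable {G : Type} [NormedAddCommGroup G] [InnerProductSpace ℂ G] [CompleteSpace G]
  {K : Submodule ℂ G} [CompleteSpace K] {V₁ V₂ : ℝ≥0 → K →L[ℂ] K} {U₁ U₂ : ℝ → G →L[ℂ] G}

namespace IsUnitaryExtensionPair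

theorem inner_orthogonalProjectionOnto_apply_apply (h : IsUnitaryExtensionPair K V₁ V₂ U₁ U₂)
    {S : Submodule ℂ Kᗮ} (hS : ReducesPair (dualSemigroup K U₁) (dualSemigroup K U₂) S) {k : K}
    (hk : k ∈ (inducedPart U₁ U₂ S)ᗮ) (t s : ℝ) {x : Kᗮ} (hx : x ∈ S) :
    ⟪Kᗮ.orthogonalProjectionOnto (U₁ t (U₂ s k)), x⟫_ℂ = 0 := by
  rw [Submodule.inner_orthogonalProjectionOnto_eq_of_mem_right, h.inner_apply_apply_left,
    inner_eq_zero_symm]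
  exact h.inner_eq_zero_of_mem_unitaryHull hS (apply_apply_mem_unitaryHull _ _ hx) hk

theorem apply_apply_mem_of_mem_orthogonal (h : IsUnitaryExtensionPair K V₁ V₂ U₁ U₂)
    (hd : SgDoublyCommute (dualSemigroup K U₁) (dualSemigroup K U₂)) {k : K}
    (hk : k ∈ (inducedPart U₁ U₂ (bishiftPart (dualSemigroup K U₁) (dualSemigroup K U₂)) ⊔
      inducedPart U₁ U₂ (unitaryPart (dualSemigroup K U₂)) ⊔
      inducedPart U₁ U₂ (unitaryPart (dualSemigroup K U₁)))ᗮ) (t s : ℝ) :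
    U₁ t (U₂ s k) ∈ K := by
  simp only [← Submodule.inf_orthogonal, Submodule.mem_inf] at hk
  obtain ⟨⟨hkm, hk₂⟩, hk₁⟩ := hk
  have hiso₁ := h.dual.left.isIsometrySemigroup
  have hiso₂ := h.dual.right.isIsometrySemigroup
  have hzero : Kᗮ.orthogonalProjectionOnto (U₁ t (U₂ s k)) = 0 :=
    hd.eq_zero_of_orthogonal hiso₁ hiso₂
      (fun _ => h.inner_orthogonalProjectionOnto_apply_apply
        (hd.reducesPair_bishiftPart hiso₁ hiso₂) hkm t s)
      (fun _ => h.inner_orthogonalProjectionOnto_apply_apply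
        (hd.reducesPair_unitaryPart_left hiso₁) hk₁ t s)
      (fun _ => h.inner_orthogonalProjectionOnto_apply_apply
        (hd.reducesPair_unitaryPart_right hiso₂) hk₂ t s)
  rwa [Submodule.orthogonalProjectionOnto_eq_zero_iff, K.orthogonal_orthogonal] at hzero

theorem isUnitarySemigroupOn_of_apply_apply_mem (h : IsUnitaryExtensionPair K V₁ V₂ U₁ U₂)
    {L : Submodule ℂ K} (hL₁ : ReducedBy V₁ L) (hL₂ : ReducedBy V₂ L)
    (hL : ∀ k ∈ L, ∀ t s, U₁ t (U₂ s k) ∈ K) :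
    IsUnitarySemigroupOn V₁ L ∧ IsUnitarySemigroupOn V₂ L := by
  constructor
  · refine h.left.isIsometrySemigroup.isUnitarySemigroupOn hL₁ fun k hk =>
      h.left.mem_unitaryPart fun r => ?_
    simpa only [h.right.isUnitaryGroup.zero_apply] using hL k hk r 0
  · refine h.right.isIsometrySemigroup.isUnitarySemigroupOn hL₂ fun k hk =>
      h.right.mem_unitaryPart fun r => ?_
    simpa only [h.left.isUnitaryGroup.zero_apply] using hL k hk 0 r

theorem isUnitarySemigroupOn_and_isCnuOn_inducedPart
    (h : IsUnitaryExtensionPair K V₁ V₂ U₁ U₂)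
    (hd : SgDoublyCommute (dualSemigroup K U₁) (dualSemigroup K U₂)) :
    IsUnitarySemigroupOn V₁ (inducedPart U₁ U₂ (unitaryPart (dualSemigroup K U₁))) ∧
      IsCnuOn V₂ (inducedPart U₁ U₂ (unitaryPart (dualSemigroup K U₁))) := by
  have hiso := h.dual.left.isIsometrySemigroup
  have hunitary := hiso.isUnitarySemigroupOn hiso.reducedBy_unitaryPart le_rfl
  exact ⟨h.isUnitarySemigroupOn_inducedPart (hd.reducesPair_unitaryPart_left hiso)
    hunitary, h.isCnuOn_inducedPart hunitary⟩

theorem isCnuOn_and_isUnitarySemigroupOn_inducedPart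
    (h : IsUnitaryExtensionPair K V₁ V₂ U₁ U₂)
    (hd : SgDoublyCommute (dualSemigroup K U₁) (dualSemigroup K U₂)) :
    IsCnuOn V₁ (inducedPart U₁ U₂ (unitaryPart (dualSemigroup K U₂))) ∧
      IsUnitarySemigroupOn V₂ (inducedPart U₁ U₂ (unitaryPart (dualSemigroup K U₂))) := by
  rw [h.inducedPart_comm]
  exact (h.symm.isUnitarySemigroupOn_and_isCnuOn_inducedPart hd.symm).symm

end IsUnitaryExtensionPair

end Decomposition

/-- Cooper-type decomposition for a dual doubly commuting pair of commuting semigroups of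
isometries: `H = H_m ⊕ H_{p,u} ⊕ H_{u,p} ⊕ H_{u,u}`, where on `H_m` the pair is a
modified-bishift-semigroup. -/
theorem dual_doubly_commuting_decomposition {G : Type} [NormedAddCommGroup G]
    [InnerProductSpace ℂ G] [CompleteSpace G] (K : Submodule ℂ G) [CompleteSpace ↥K]
    (V1 V2 : ℝ≥0 → ↥K →L[ℂ] ↥K)
    (h1 : IsIsometrySemigroup V1) (h2 : IsIsometrySemigroup V2) (hc : SgCommute V1 V2)
    (U1 U2 : ℝ → G →L[ℂ] G) (hext : IsMinimalUnitaryExtension K V1 V2 U1 U2)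
    (hddc : DualDoublyCommutes K U1 U2) :
    ∃ Hm Hpu Hup Huu : Submodule ℂ ↥K,
      (IsClosed (Hm : Set ↥K) ∧ IsClosed (Hpu : Set ↥K) ∧
        IsClosed (Hup : Set ↥K) ∧ IsClosed (Huu : Set ↥K)) ∧
      (OrthoSubspaces Hm Hpu ∧ OrthoSubspaces Hm Hup ∧ OrthoSubspaces Hm Huu ∧
        OrthoSubspaces Hpu Hup ∧ OrthoSubspaces Hpu Huu ∧ OrthoSubspaces Hup Huu) ∧
      Hm ⊔ Hpu ⊔ Hup ⊔ Huu = ⊤ ∧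
      (ReducedBy V1 Hm ∧ ReducedBy V2 Hm ∧ ReducedBy V1 Hpu ∧ ReducedBy V2 Hpu ∧
        ReducedBy V1 Hup ∧ ReducedBy V2 Hup ∧ ReducedBy V1 Huu ∧ ReducedBy V2 Huu) ∧
      (∃ (cs : CompleteSpace ↥Hm) (i1 : ∀ t : ℝ≥0, ∀ x ∈ Hm, V1 t x ∈ Hm)
          (i2 : ∀ t : ℝ≥0, ∀ x ∈ Hm, V2 t x ∈ Hm),
        @IsModifiedBishift ↥Hm _ _ cs (SGRestrict V1 Hm i1) (SGRestrict V2 Hm i2)) ∧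
      (IsCnuOn V1 Hpu ∧ IsUnitarySemigroupOn V2 Hpu) ∧
      (IsUnitarySemigroupOn V1 Hup ∧ IsCnuOn V2 Hup) ∧
      (IsUnitarySemigroupOn V1 Huu ∧ IsUnitarySemigroupOn V2 Huu) := by
  have hp := hext.isUnitaryExtensionPair
  have hd := hddc.sgDoublyCommute hp
  have hiso₁ := hp.dual.left.isIsometrySemigroup
  have hiso₂ := hp.dual.right.isIsometrySemigroup
  have hm := hp.reducesPair_inducedPart (hd.reducesPair_bishiftPart hiso₁ hiso₂)
  have hpu := hp.reducesPair_inducedPart (hd.reducesPair_unitaryPart_right hiso₂)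
  have hup := hp.reducesPair_inducedPart (hd.reducesPair_unitaryPart_left hiso₁)
  have huu := hm.orthogonal_sup_sup hpu hup
  have hm_pu := hp.orthoSubspaces_inducedPart_bishiftPart_unitaryPart_right hd
  have hm_up := hp.orthoSubspaces_inducedPart_bishiftPart_unitaryPart_left hd
  have hpu_up := hext.orthoSubspaces_inducedPart_unitaryPart hd
  exact ⟨_, _, _, _, ⟨hm.isClosed, hpu.isClosed, hup.isClosed, huu.isClosed⟩,
    ⟨hm_pu, hm_up, orthoSubspaces_orthogonal_of_le (le_sup_left.trans le_sup_left), hpu_up,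
      orthoSubspaces_orthogonal_of_le (le_sup_right.trans le_sup_left),
      orthoSubspaces_orthogonal_of_le le_sup_right⟩,
    sup_sup_sup_orthogonal_eq_top (Submodule.isOrtho_iff_inner_eq.2 hm_pu)
      (Submodule.isOrtho_iff_inner_eq.2 hm_up) (Submodule.isOrtho_iff_inner_eq.2 hpu_up),
    ⟨hm.left, hm.right, hpu.left, hpu.right, hup.left, hup.right, huu.left, huu.right⟩,
    ⟨inferInstance, hm.left.1, hm.right.1, hext.isModifiedBishift_inducedPart hd _ _⟩,
    hp.isCnuOn_and_isUnitarySemigroupOn_inducedPart hd,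
    hp.isUnitarySemigroupOn_and_isCnuOn_inducedPart hd,
    hp.isUnitarySemigroupOn_of_apply_apply_mem huu.left huu.right
      fun _ hk => hp.apply_apply_mem_of_mem_orthogonal hd hk⟩
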